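/- arXiv:math/0412013 — 6 statements merged into one kernel-verified Lean document; each statement's English description precedes it below -/
import Mathlib

section
/- Let A be a connected graded k-algebra and let U be a division k-algebra. Then the (ungraded, left) global dimension of A ⊗_k U equals the projective dimension of the trivial module k = A/A_{≥1} as a left A-module. In particular, gldim(A ⊗_k U) = gldim A for every division k-algebra U. -/
open CategoryTheory Limits TensorProduct

universe u

/-- The injective dimension of a module `M`, defined as the least `n : ℕ∞` for which
there is an injective resolution of `M` that vanishes in all cohomological degrees `> n`. -/
noncomputable def ModuleCat.injDim {R : Type u} [Ring R] (M : ModuleCat.{u} R) : ℕ∞ :=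
  sInf {n : ℕ∞ | ∃ I : InjectiveResolution M, ∀ i : ℕ, n < (i : ℕ∞) → IsZero (I.cocomplex.X i)}

/-- The projective dimension of a module `M`, defined as the least `n : ℕ∞` for which
there is a projective resolution of `M` that vanishes in all homological degrees `> n`. -/
noncomputable def ModuleCat.projDim {R : Type u} [Ring R] (M : ModuleCat.{u} R) : ℕ∞ :=
  sInf {n : ℕ∞ | ∃ P : ProjectiveResolution M, ∀ i : ℕ, n < (i : ℕ∞) → IsZero (P.complex.X i)}

/-- The injective dimension of a ring as a left module over itself. -/
noncomputable def Ring.selfInjDim (R : Type u) [Ring R] : ℕ∞ :=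
  ModuleCat.injDim (ModuleCat.of R R)

/-- The left global dimension of a ring: the supremum of the projective dimensions
of all left `R`-modules. -/
noncomputable def Ring.globalDim (R : Type u) [Ring R] : ℕ∞ :=
  ⨆ M : ModuleCat.{u} R, M.projDim

/-!
The lower bounds are cheap: the trivial module is an `A`-module, and an `A`-module `N` is a direct
summand of `N ⊗ U`, whose projective dimension over `A` is at most that over `A ⊗ U` because
`A ⊗ U` is free over `A`.

For the upper bound, grade `B = A ⊗ U` by the degree in `A` and deform a `B`-module `M` to its Rees
module `X = M[T]`, on which multiplication by `T` is an injective endomorphism `t` raising degrees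
by one. The fibre `X ⧸ (1 - t)X` is `M`, while in the fibre `X ⧸ tX` the positive degrees of `B` act
by zero; by connectedness that fibre is `k ⊗ M`. Since `M` is projective over `U`, tensoring a
projective resolution of `k` with `M` bounds the projective dimension of `k ⊗ M` by that of `k`.

Projective dimension does not increase when passing from `X ⧸ tX` to `X ⧸ (1 - t)X`. If `X ⧸ tX` is
projective, then `t` has a left inverse `q`, whose part of degree `-1` is again a left inverse and
is locally nilpotent. With `q` replaced by this part, `1 - q` is invertible, and
`(1 - q)t = -(1 - t)` shows that it carries `tX` onto `(1 - t)X`. The general case follows by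
induction along graded free covers of `X` to which `t` lifts.
-/

namespace GradedGlobalDim

section ProjectiveResolution

open CategoryTheory.Abelian

variable {C : Type*} [Category* C] [Abelian C]

lemma quasiIso_toSingle₀ {K : ChainComplex C ℕ} {X : C} {π : K ⟶ (ChainComplex.single₀ C).obj X}
    {p : K.X 0 ⟶ X} (hp : π.f 0 = p) (epi_p : Epi p) (hdp : K.d 1 0 ≫ p = 0)
    (exact_zero : (ShortComplex.mk _ _ hdp).Exact)
    (exact_succ : ∀ i, (ShortComplex.mk _ _ (K.d_comp_d (i + 2) (i + 1) i)).Exact) :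
    QuasiIso π where
  quasiIsoAt := by
    rintro (_ | i)
    · rw [ChainComplex.quasiIsoAt₀_iff,
        ShortComplex.quasiIso_iff_of_zeros' _ (K.shape 0 0 (by simp)) rfl rfl]
      refine (ShortComplex.exact_and_epi_g_iff_of_iso (S₂ := .mk _ _ hdp) ?_).2 ⟨exact_zero, epi_p⟩
      refine ShortComplex.isoMk (Iso.refl _) (Iso.refl _) (Iso.refl _) ?_ ?_
      · exact (Category.id_comp _).trans (Category.comp_id _).symm
      · exact (Category.id_comp _).trans ((Category.comp_id (π.f 0)).trans hp).symm
    · rw [quasiIsoAt_iff_exactAt' _ _ (ChainComplex.exactAt_succ_single_obj _ _),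
        HomologicalComplex.exactAt_iff' _ (i + 2) (i + 1) i (by simp) (by simp)]
      exact exact_succ i

/-- Splicing a projective resolution of `X₁` with a short exact sequence `X₁ ⟶ X₂ ⟶ X₃` whose
middle term is projective gives a projective resolution of `X₃`. -/
noncomputable def resolutionOfShortExact {S : ShortComplex C} (hS : S.ShortExact)
    [Projective S.X₂] (Q : ProjectiveResolution S.X₁) : ProjectiveResolution S.X₃ := by
  let q : Q.complex.X 0 ⟶ S.X₁ := Q.π.f 0
  have hq : Q.complex.d 1 0 ≫ q = 0 := Q.complex_d_comp_π_f_zero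
  have hd : Q.complex.d 1 0 ≫ q ≫ S.f = 0 := by
    rw [← Category.assoc, hq, zero_comp]
  have hg : (q ≫ S.f) ≫ S.g = 0 := by
    rw [Category.assoc, S.zero, comp_zero]
  have := hS.mono_f
  have : Epi q := inferInstanceAs (Epi (Q.π.f 0))
  have exact_zero : (ShortComplex.mk _ _ hg).Exact :=
    (ShortComplex.exact_iff_of_epi_of_isIso_of_mono
      (S₁ := ShortComplex.mk _ _ hg) (S₂ := S) { τ₁ := q, τ₂ := 𝟙 _, τ₃ := 𝟙 _ }).2 hS.exact
  have exact_one : (ShortComplex.mk _ _ hd).Exact :=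
    (ShortComplex.exact_iff_of_epi_of_isIso_of_mono
      (S₁ := ShortComplex.mk _ _ hq) (S₂ := ShortComplex.mk _ _ hd)
      { τ₁ := 𝟙 _, τ₂ := 𝟙 _, τ₃ := S.f }).1 Q.exact₀
  let K := ChainComplex.augment Q.complex (q ≫ S.f) hd
  exact
    { complex := K
      projective := by
        rintro (_ | i)
        · assumption
        · exact Q.projective i
      π := (ChainComplex.toSingle₀Equiv K S.X₃).symm ⟨S.g, hg⟩
      quasiIso := quasiIso_toSingle₀
        (ChainComplex.toSingle₀Equiv_symm_apply_f_zero (C := K) S.g hg) hS.epi_g hg exact_zero <| by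
          rintro (_ | i)
          · exact exact_one
          · exact Q.exact_succ i }

lemma hasProjectiveDimensionLE_of_isZero {X : C} (P : ProjectiveResolution X) {n : ℕ}
    (hP : ∀ i, n < i → IsZero (P.complex.X i)) : HasProjectiveDimensionLE X n := by
  let := HasExt.standard C
  refine HasProjectiveDimensionLT.mk fun i hi Y e => ?_
  obtain ⟨f, hf, rfl⟩ := P.extMk_surjective e (i + 1) rfl
  obtain ⟨j, rfl⟩ := Nat.exists_eq_add_of_le' hi
  exact (P.extMk_eq_zero_iff f _ rfl hf (j + n) rfl).2 ⟨0, (hP _ (by omega)).eq_of_src _ _⟩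

lemma exists_resolution_isZero [EnoughProjectives C] {X : C} {n : ℕ}
    (hX : HasProjectiveDimensionLE X n) :
    ∃ P : ProjectiveResolution X, ∀ i, n < i → IsZero (P.complex.X i) := by
  induction n generalizing X with
  | zero =>
    have := (projective_iff_hasProjectiveDimensionLE_zero X).2 hX
    exact ⟨ProjectiveResolution.self X, fun i hi =>
      HomologicalComplex.isZero_single_obj_X _ _ _ _ (by omega)⟩
  | succ n ih =>
    obtain ⟨⟨P, f⟩⟩ := EnoughProjectives.presentation X
    have hS : (ShortComplex.mk (kernel.ι f) f (kernel.condition f)).ShortExact :=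
      { exact := ShortComplex.exact_kernel f }
    obtain ⟨Q, hQ⟩ := ih ((hS.hasProjectiveDimensionLT_X₃_iff n ‹_›).1 hX)
    refine ⟨resolutionOfShortExact hS Q, fun i hi => ?_⟩
    obtain ⟨i, rfl⟩ := Nat.exists_eq_add_one_of_ne_zero (by omega : i ≠ 0)
    exact hQ i (by omega)

end ProjectiveResolution

section Dimension

variable {R : Type u} [Ring R]

lemma projDim_le_iff (M : ModuleCat.{u} R) (n : ℕ) :
    M.projDim ≤ n ↔ HasProjectiveDimensionLE M n := by
  refine ⟨fun h => ?_, fun h => ?_⟩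
  · have hne : {n : ℕ∞ | ∃ P : ProjectiveResolution M, ∀ i : ℕ, n < (i : ℕ∞) →
        IsZero (P.complex.X i)}.Nonempty :=
      ⟨⊤, ProjectiveResolution.of M, fun i hi => absurd hi not_top_lt⟩
    obtain ⟨P, hP⟩ := csInf_mem hne
    exact hasProjectiveDimensionLE_of_isZero P
      fun i hi => hP i (h.trans_lt (Nat.cast_lt.2 hi))
  · obtain ⟨P, hP⟩ := exists_resolution_isZero h
    exact sInf_le ⟨P, fun i hi => hP i (Nat.cast_lt.1 hi)⟩

lemma globalDim_le_iff (n : ℕ) :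
    Ring.globalDim R ≤ n ↔ ∀ M : ModuleCat.{u} R, HasProjectiveDimensionLE M n :=
  iSup_le_iff.trans (forall_congr' fun M => projDim_le_iff M n)

variable {X Y Z : Type u} [AddCommGroup X] [AddCommGroup Y] [AddCommGroup Z]
  [Module R X] [Module R Y] [Module R Z]

lemma hasProjectiveDimensionLE_zero_iff :
    HasProjectiveDimensionLE (ModuleCat.of R X) 0 ↔ Module.Projective R X := by
  rw [← projective_iff_hasProjectiveDimensionLE_zero, ← IsProjective.iff_projective]

lemma hasProjectiveDimensionLE_of_retract {i : X →ₗ[R] Y} {r : Y →ₗ[R] X} (h : r ∘ₗ i = .id)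
    {n : ℕ} (_ : HasProjectiveDimensionLE (ModuleCat.of R Y) n) :
    HasProjectiveDimensionLE (ModuleCat.of R X) n :=
  Retract.hasProjectiveDimensionLT ⟨ModuleCat.ofHom i, ModuleCat.ofHom r, ModuleCat.hom_ext h⟩ _

lemma hasProjectiveDimensionLE_succ_iff [Module.Projective R Y] {f : X →ₗ[R] Y} {g : Y →ₗ[R] Z}
    (hf : Function.Injective f) (hfg : Function.Exact f g) (hg : Function.Surjective g) (n : ℕ) :
    HasProjectiveDimensionLE (ModuleCat.of R Z) (n + 1) ↔
      HasProjectiveDimensionLE (ModuleCat.of R X) n := by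
  let S := ShortComplex.mk (ModuleCat.ofHom f) (ModuleCat.ofHom g)
    (ModuleCat.hom_ext hfg.linearMap_comp_eq_zero)
  have hS : S.ShortExact :=
    { exact := (ShortComplex.ShortExact.moduleCat_exact_iff_function_exact S).2 hfg
      mono_f := (ModuleCat.mono_iff_injective _).2 hf
      epi_g := (ModuleCat.epi_iff_surjective _).2 hg }
  exact hS.hasProjectiveDimensionLT_X₃_iff n ((IsProjective.iff_projective _).1 ‹_›)

lemma hasProjectiveDimensionLE_succ_iff_ker [Module.Projective R Y] {g : Y →ₗ[R] Z}
    (hg : Function.Surjective g) (n : ℕ) :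
    HasProjectiveDimensionLE (ModuleCat.of R Z) (n + 1) ↔
      HasProjectiveDimensionLE (ModuleCat.of R (LinearMap.ker g)) n :=
  hasProjectiveDimensionLE_succ_iff (LinearMap.ker g).subtype_injective
    (LinearMap.exact_subtype_ker_map g) hg n

end Dimension

section Grading

variable {ι X Y σ : Type*} [DecidableEq ι] [AddCommGroup X] [AddCommGroup Y]

variable {ℳ : ι → AddSubgroup X} [DirectSum.Decomposition ℳ]

lemma isInternal_comap_subtype [SetLike σ X] [AddSubgroupClass σ X] {N : σ}
    (hN : DirectSum.SetLike.IsHomogeneous ℳ N) :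
    DirectSum.IsInternal fun j => (ℳ j).comap (AddSubgroupClass.subtype N) := by
  classical
  let 𝒦 j := (ℳ j).comap (AddSubgroupClass.subtype N)
  let inc (j : ι) : 𝒦 j →+ ℳ j := (AddSubgroupClass.subtype N).addSubgroupComap (ℳ j)
  have inc_injective (j : ι) : Function.Injective (inc j) :=
    fun x y h => Subtype.ext (Subtype.ext congr(($h : X)))
  have coe_map : (DirectSum.coeAddMonoidHom ℳ).comp (DirectSum.map inc) =
      (AddSubgroupClass.subtype N).comp (DirectSum.coeAddMonoidHom 𝒦) := by
    ext
    simp only [AddMonoidHom.coe_comp, Function.comp_apply, DirectSum.map_of,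
      DirectSum.coeAddMonoidHom_of]
    rfl
  refine ⟨Function.Injective.of_comp (f := AddSubgroupClass.subtype N) ?_, fun x => ?_⟩
  · rw [← AddMonoidHom.coe_comp, ← coe_map, AddMonoidHom.coe_comp]
    exact (DirectSum.Decomposition.isInternal ℳ).injective.comp
      ((DirectSum.map_injective inc).2 inc_injective)
  · refine ⟨∑ j ∈ (DirectSum.decompose ℳ (x : X)).support,
      DirectSum.of (fun j => 𝒦 j) j ⟨⟨_, hN j x.2⟩, (DirectSum.decompose ℳ (x : X) j).2⟩,
      Subtype.ext ?_⟩
    rw [map_sum, AddSubmonoidClass.coe_finsetSum]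
    refine Eq.trans (Finset.sum_congr rfl fun j _ => ?_) (DirectSum.sum_support_decompose ℳ (x : X))
    exact congrArg Subtype.val (DirectSum.coeAddMonoidHom_of 𝒦 j _)

variable {𝒩 : ι → AddSubgroup Y} [DirectSum.Decomposition 𝒩] [AddCommMonoid ι] [IsCancelAdd ι]

lemma decompose_map_add {c : ι} {g : X →+ Y} (hg : ∀ j, ∀ x ∈ ℳ j, g x ∈ 𝒩 (j + c)) (x : X)
    (j : ι) : (DirectSum.decompose 𝒩 (g x) (j + c) : Y) = g (DirectSum.decompose ℳ x j) := by
  induction x using DirectSum.Decomposition.inductionOn ℳ with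
  | zero => simp
  | @homogeneous i x =>
    by_cases hij : i = j
    · subst hij
      rw [DirectSum.decompose_of_mem_same _ (hg i x x.2), DirectSum.decompose_of_mem_same _ x.2]
    · rw [DirectSum.decompose_of_mem_ne _ (hg i x x.2) (by simpa using hij),
        DirectSum.decompose_of_mem_ne _ x.2 hij, map_zero]
  | add x y hx hy => simp [hx, hy]

lemma decompose_map_of_lt {ℳ : ℕ → AddSubgroup X} {𝒩 : ℕ → AddSubgroup Y}
    [DirectSum.Decomposition ℳ] [DirectSum.Decomposition 𝒩] {c : ℕ} {g : X →+ Y}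
    (hg : ∀ j, ∀ x ∈ ℳ j, g x ∈ 𝒩 (j + c)) (x : X) {d : ℕ} (hd : d < c) :
    (DirectSum.decompose 𝒩 (g x) d : Y) = 0 := by
  induction x using DirectSum.Decomposition.inductionOn ℳ with
  | zero => simp
  | homogeneous x => exact DirectSum.decompose_of_mem_ne _ (hg _ x x.2) (by omega)
  | add x y hx hy => simp [hx, hy]

end Grading

section FreeModule

variable {ι S B σ : Type*} [AddCommMonoid ι] [Ring B] [SetLike σ B]

/-- The degree `d` piece of the free module on a set `S` of generators with prescribed degrees. -/
noncomputable def freePiece (𝒜 : ι → σ) (deg : S → ι) (d : ι) : AddSubgroup (S →₀ B) :=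
  AddSubgroup.closure {f | ∃ i s, i + deg s = d ∧ ∃ b ∈ 𝒜 i, f = Finsupp.single s b}

variable {𝒜 : ι → σ} {deg : S → ι}

lemma single_mem_freePiece {i : ι} {b : B} (hb : b ∈ 𝒜 i) (s : S) :
    Finsupp.single s b ∈ freePiece 𝒜 deg (i + deg s) :=
  AddSubgroup.subset_closure ⟨i, s, rfl, b, hb, rfl⟩

lemma freePiece_le {d : ι} {N : AddSubgroup (S →₀ B)}
    (h : ∀ i s, i + deg s = d → ∀ b ∈ 𝒜 i, Finsupp.single s b ∈ N) : freePiece 𝒜 deg d ≤ N := by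
  rw [freePiece, AddSubgroup.closure_le]
  rintro _ ⟨i, s, hd, b, hb, rfl⟩
  exact h i s hd b hb

variable (𝒜 deg) [AddSubgroupClass σ B] [DecidableEq ι] [GradedRing 𝒜]

noncomputable instance : DirectSum.Decomposition (freePiece 𝒜 deg) := by
  let single (s : S) (i : ι) : 𝒜 i →+ freePiece 𝒜 deg (i + deg s) :=
    ((Finsupp.singleAddHom s).comp (AddSubgroupClass.subtype (𝒜 i))).codRestrict _
      fun b => single_mem_freePiece b.2 s
  let split : (S →₀ B) →+ DirectSum ι (freePiece 𝒜 deg ·) := Finsupp.liftAddHom fun s =>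
    (DirectSum.toAddMonoid fun i => (DirectSum.of (freePiece 𝒜 deg ·) _).comp
      (single s i)).comp (DirectSum.decomposeAddEquiv 𝒜).toAddMonoidHom
  have split_single (s : S) {i : ι} (b : 𝒜 i) : split (Finsupp.single s b) =
      DirectSum.of (freePiece 𝒜 deg ·) (i + deg s) (single s i b) := by
    simp [split]
  have coe_split : (DirectSum.coeAddMonoidHom (freePiece 𝒜 deg)).comp split = .id _ := by
    ext s b : 2
    induction b using DirectSum.Decomposition.inductionOn 𝒜 with
    | zero => simp
    | homogeneous b =>
      simp only [AddMonoidHom.comp_apply, Finsupp.singleAddHom_apply, split_single,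
        DirectSum.coeAddMonoidHom_of]
      rfl
    | add b c hb hc => simp_all
  refine .ofAddHom _ split coe_split ?_
  ext d x : 2
  have hd : freePiece 𝒜 deg d ≤ (DirectSum.of (freePiece 𝒜 deg ·) d).range.comap split := by
    refine freePiece_le fun i s hd b hb => ?_
    subst hd
    exact ⟨single s i ⟨b, hb⟩, (split_single s ⟨b, hb⟩).symm⟩
  obtain ⟨y, hy⟩ := hd x.2
  have hyx : y = x := Subtype.ext <| by
    simpa [← hy] using DFunLike.congr_fun coe_split (x : S →₀ B)
  simp [← hy, hyx]

instance : SetLike.GradedSMul 𝒜 (freePiece 𝒜 deg) where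
  smul_mem {i j b f} hb hf := by
    suffices freePiece 𝒜 deg j ≤ (freePiece 𝒜 deg (i + j)).comap (DistribSMul.toAddMonoidHom _ b)
      from this hf
    refine freePiece_le fun i' s hs c hc => ?_
    simpa [← hs, add_assoc] using single_mem_freePiece (SetLike.mul_mem_graded hb hc) s

end FreeModule

section RangeQuotient

variable {R : Type u} [Ring R]

lemma exists_leftInverse_of_projective {M : Type*} [AddCommGroup M] [Module R M]
    {t : Module.End R M} (ht : Function.Injective t) [Module.Projective R (M ⧸ LinearMap.range t)] :
    ∃ q : Module.End R M, q * t = 1 := by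
  have hexact : Function.Exact t (LinearMap.range t).mkQ :=
    LinearMap.exact_iff.2 (Submodule.ker_mkQ _)
  have hsplit := Module.projective_lifting_property (LinearMap.range t).mkQ .id
    (Submodule.mkQ_surjective _)
  have hsplit_iff := hexact.split_tfae'.out 0 1
  exact (hsplit_iff.1 ⟨ht, hsplit⟩).2

lemma projective_quotient_range {M : Type*} [AddCommGroup M] [Module R M] [Module.Projective R M]
    {t q : Module.End R M} (hqt : q * t = 1) :
    Module.Projective R (M ⧸ LinearMap.range t) := by
  refine .of_split ((LinearMap.range t).liftQ (1 - t * q) ?_) (LinearMap.range t).mkQ ?_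
  · rw [LinearMap.range_le_ker_iff]
    change (1 - t * q) * t = 0
    rw [sub_mul, mul_assoc, hqt, one_mul, mul_one, sub_self]
  · ext x
    simp

lemma bijective_one_sub_of_locally_nilpotent {M : Type*} [AddCommGroup M] [Module R M]
    {q : Module.End R M} (hq : ∀ x, ∃ n, (q ^ n) x = 0) :
    Function.Bijective (1 - q : Module.End R M) := by
  refine ⟨(injective_iff_map_eq_zero _).2 fun x hx => ?_, fun x => ?_⟩
  · obtain ⟨n, hn⟩ := hq x
    have hfix : q x = x := (sub_eq_zero.1 hx).symm
    rwa [Module.End.pow_apply, Function.iterate_fixed hfix] at hn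
  · obtain ⟨n, hn⟩ := hq x
    refine ⟨(∑ i ∈ Finset.range n, q ^ i) x, ?_⟩
    rw [← Module.End.mul_apply, mul_neg_geom_sum, LinearMap.sub_apply, hn, Module.End.one_apply,
      sub_zero]

lemma nonempty_quotient_range_equiv {M : Type*} [AddCommGroup M] [Module R M]
    {t q : Module.End R M} (hqt : q * t = 1) (hq : ∀ x, ∃ n, (q ^ n) x = 0) :
    Nonempty ((M ⧸ LinearMap.range t) ≃ₗ[R] M ⧸ LinearMap.range (1 - t)) := by
  let e := LinearEquiv.ofBijective (1 - q) (bijective_one_sub_of_locally_nilpotent hq)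
  have he : (1 - q) * t = -(1 - t) := by rw [sub_mul, hqt, one_mul, neg_sub]
  refine ⟨Submodule.Quotient.equiv _ _ e ?_⟩
  calc (LinearMap.range t).map (1 - q)
    _ = LinearMap.range (-(1 - t)) := by rw [← he]; exact (LinearMap.range_comp t (1 - q)).symm
    _ = LinearMap.range (1 - t) := LinearMap.range_neg _

lemma nonempty_quotient_range_equiv_of_section {M N : Type*} [AddCommGroup M] [Module R M]
    [AddCommGroup N] [Module R N] {t : Module.End R M} {g : M →ₗ[R] N} {s : N →+ M}
    (hgs : ∀ y, g (s y) = y) (hgt : g ∘ₗ t = 0) (hs : ∀ x, x - s (g x) ∈ LinearMap.range t) :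
    Nonempty ((M ⧸ LinearMap.range t) ≃ₗ[R] N) := by
  have range_eq : LinearMap.range t = LinearMap.ker g := by
    refine le_antisymm (LinearMap.range_le_ker_iff.2 hgt) fun x hx => ?_
    simpa [LinearMap.mem_ker.1 hx] using hs x
  exact ⟨(Submodule.quotEquivOfEq _ _ range_eq).trans
    (g.quotKerEquivOfSurjective fun y => ⟨s y, hgs y⟩)⟩

variable {X Y Z : Type u} [AddCommGroup X] [AddCommGroup Y] [AddCommGroup Z]
  [Module R X] [Module R Y] [Module R Z]

lemma hasProjectiveDimensionLE_quotient_range_succ_iff {f : X →ₗ[R] Y} {g : Y →ₗ[R] Z}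
    (hf : Function.Injective f) (hfg : Function.Exact f g) (hg : Function.Surjective g)
    {r : Module.End R X} {s : Module.End R Y} {t : Module.End R Z}
    (hrs : ∀ x, f (r x) = s (f x)) (hst : ∀ y, g (s y) = t (g y)) (ht : Function.Injective t)
    [Module.Projective R (Y ⧸ LinearMap.range s)] (n : ℕ) :
    HasProjectiveDimensionLE (ModuleCat.of R (Z ⧸ LinearMap.range t)) (n + 1) ↔
      HasProjectiveDimensionLE (ModuleCat.of R (X ⧸ LinearMap.range r)) n := by
  have hf' : LinearMap.range r ≤ (LinearMap.range s).comap f := by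
    rintro _ ⟨x, rfl⟩
    exact ⟨f x, (hrs x).symm⟩
  have hg' : LinearMap.range s ≤ (LinearMap.range t).comap g := by
    rintro _ ⟨y, rfl⟩
    exact ⟨g y, (hst y).symm⟩
  refine hasProjectiveDimensionLE_succ_iff (f := Submodule.mapQ _ _ f hf')
    (g := Submodule.mapQ _ _ g hg') ?_ ?_ ?_ n
  · rw [injective_iff_map_eq_zero]
    rintro ⟨x⟩ hx
    obtain ⟨y, hy⟩ := (Submodule.Quotient.mk_eq_zero _).1 hx
    have hgy : g y = 0 := ht <| by rw [← hst, hy, hfg.apply_apply_eq_zero, map_zero]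
    obtain ⟨x', rfl⟩ := (hfg y).1 hgy
    exact (Submodule.Quotient.mk_eq_zero _).2 ⟨x', hf <| by rw [hrs, hy]⟩
  · rintro ⟨y⟩
    refine ⟨fun hy => ?_, ?_⟩
    · obtain ⟨z, hz⟩ := (Submodule.Quotient.mk_eq_zero _).1 hy
      obtain ⟨y', rfl⟩ := hg z
      obtain ⟨x, hx⟩ := (hfg (y - s y')).1 <| by rw [map_sub, hst, hz, sub_self]
      refine ⟨Submodule.Quotient.mk x, (Submodule.Quotient.eq _).2 ?_⟩
      exact ⟨-y', by rw [hx, map_neg]; abel⟩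
    · rintro ⟨⟨x⟩, hx⟩
      rw [← hx]
      exact congrArg Submodule.Quotient.mk (hfg.apply_apply_eq_zero x)
  · rintro ⟨z⟩
    obtain ⟨y, rfl⟩ := hg z
    exact ⟨Submodule.Quotient.mk y, rfl⟩

/-- The endomorphism of the kernel of `g` induced by `s`, where `g` intertwines `s` and `t`. -/
def kerRestrict {g : Y →ₗ[R] Z} {s : Module.End R Y} {t : Module.End R Z}
    (hst : ∀ y, g (s y) = t (g y)) : Module.End R (LinearMap.ker g) :=
  s.restrict fun y hy => by rw [LinearMap.mem_ker, hst, hy, map_zero]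

variable {g : Y →ₗ[R] Z} {s : Module.End R Y} {t : Module.End R Z}

lemma hasProjectiveDimensionLE_quotient_range_succ_iff_ker (hg : Function.Surjective g)
    (hst : ∀ y, g (s y) = t (g y)) (ht : Function.Injective t)
    [Module.Projective R (Y ⧸ LinearMap.range s)] (n : ℕ) :
    HasProjectiveDimensionLE (ModuleCat.of R (Z ⧸ LinearMap.range t)) (n + 1) ↔
      HasProjectiveDimensionLE
        (ModuleCat.of R (LinearMap.ker g ⧸ LinearMap.range (kerRestrict hst))) n :=
  hasProjectiveDimensionLE_quotient_range_succ_iff (LinearMap.ker g).subtype_injective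
    (LinearMap.exact_subtype_ker_map g) hg (fun _ => rfl) hst ht n

lemma hasProjectiveDimensionLE_quotient_range_one_sub_succ_iff_ker
    (hg : Function.Surjective g) (hst : ∀ y, g (s y) = t (g y))
    (ht : Function.Injective (1 - t : Module.End R Z))
    [Module.Projective R (Y ⧸ LinearMap.range (1 - s))] (n : ℕ) :
    HasProjectiveDimensionLE (ModuleCat.of R (Z ⧸ LinearMap.range (1 - t))) (n + 1) ↔
      HasProjectiveDimensionLE
        (ModuleCat.of R (LinearMap.ker g ⧸ LinearMap.range (1 - kerRestrict hst))) n :=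
  hasProjectiveDimensionLE_quotient_range_succ_iff (LinearMap.ker g).subtype_injective
    (LinearMap.exact_subtype_ker_map g) hg (s := 1 - s) (fun _ => rfl)
    (fun y => by simp [hst]) ht n

end RangeQuotient

section DegreeRaising

variable {B σ X : Type*} [Ring B] [SetLike σ B] [AddCommGroup X] [Module B X]

lemma smul_mem_add {𝒜 : ℕ → σ} {ℳ : ℕ → AddSubgroup X} [SetLike.GradedSMul 𝒜 ℳ] {i : ℕ} {b : B}
    (hb : b ∈ 𝒜 i) (j : ℕ) (x : X) (hx : x ∈ ℳ j) :
    DistribSMul.toAddMonoidHom X b x ∈ ℳ (j + i) :=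
  add_comm i j ▸ SetLike.GradedSMul.smul_mem hb hx

variable [AddSubgroupClass σ B] (𝒜 : ℕ → σ) [GradedRing 𝒜] (ℳ : ℕ → AddSubgroup X)
  [DirectSum.Decomposition ℳ]

lemma map_smul_of_degree_lowering_part [SetLike.GradedSMul 𝒜 ℳ] {q : Module.End B X} {p : X →+ X}
    (p_zero : ∀ x ∈ ℳ 0, p x = 0)
    (p_succ : ∀ j, ∀ x ∈ ℳ (j + 1), p x = DirectSum.decompose ℳ (q x) j) (b : B) (x : X) :
    p (b • x) = b • p x := by
  induction b using DirectSum.Decomposition.inductionOn 𝒜 with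
  | zero => simp only [zero_smul, map_zero]
  | add b c hb hc => simp only [add_smul, map_add, hb, hc]
  | @homogeneous i b =>
  have hb := smul_mem_add (ℳ := ℳ) b.2
  induction x using DirectSum.Decomposition.inductionOn ℳ with
  | zero => simp only [smul_zero, map_zero]
  | add x y hx hy => simp only [smul_add, map_add, hx, hy]
  | @homogeneous j x =>
  have hbx := hb j x x.2
  cases j with
  | succ j =>
    rw [p_succ j x x.2, p_succ (j + i) _ (by rwa [add_right_comm]), map_smul]
    exact decompose_map_add hb (q x) j
  | zero =>
    rw [p_zero x x.2, smul_zero]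
    cases i with
    | zero => exact p_zero _ hbx
    | succ i =>
      rw [p_succ i _ (by simpa using hbx), map_smul]
      exact decompose_map_of_lt hb (q x) i.lt_succ_self

lemma exists_degree_lowering_part [SetLike.GradedSMul 𝒜 ℳ] (q : Module.End B X) :
    ∃ p : Module.End B X, (∀ x ∈ ℳ 0, p x = 0) ∧
      ∀ j, ∀ x ∈ ℳ (j + 1), p x = DirectSum.decompose ℳ (q x) j := by
  let part : ∀ j, ℳ j →+ X
    | 0 => 0
    | j + 1 => (ℳ j).subtype.comp <| (DFinsupp.evalAddMonoidHom j).comp <|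
        (DirectSum.decomposeAddEquiv ℳ).toAddMonoidHom.comp <|
          q.toAddMonoidHom.comp (ℳ (j + 1)).subtype
  let p : X →+ X := (DirectSum.toAddMonoid part).comp
    (DirectSum.decomposeAddEquiv ℳ).toAddMonoidHom
  have p_homogeneous (j : ℕ) (x : ℳ j) : p x = part j x := by
    simp [p]
  have p_zero (x : X) (hx : x ∈ ℳ 0) : p x = 0 := p_homogeneous 0 ⟨x, hx⟩
  have p_succ (j : ℕ) (x : X) (hx : x ∈ ℳ (j + 1)) : p x = DirectSum.decompose ℳ (q x) j :=
    p_homogeneous (j + 1) ⟨x, hx⟩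
  exact ⟨{ p with map_smul' := map_smul_of_degree_lowering_part 𝒜 ℳ p_zero p_succ },
    p_zero, p_succ⟩

variable {ℳ} {t : Module.End B X}

lemma injective_one_sub_of_raises_degree (htℳ : ∀ j, ∀ x ∈ ℳ j, t x ∈ ℳ (j + 1)) :
    Function.Injective (1 - t : Module.End B X) := by
  refine (injective_iff_map_eq_zero _).2 fun x hx => ?_
  have hfix : x = t x := sub_eq_zero.1 hx
  have hcomp (j : ℕ) : (DirectSum.decompose ℳ x j : X) = 0 := by
    rw [hfix]
    induction j with
    | zero => exact decompose_map_of_lt (g := t.toAddMonoidHom) htℳ x one_pos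
    | succ j ih =>
      refine (decompose_map_add (g := t.toAddMonoidHom) htℳ x j).trans ?_
      rw [hfix, ih, map_zero]
  refine (DirectSum.decompose ℳ).injective (DirectSum.ext fun j => Subtype.ext ?_)
  rw [hcomp, DirectSum.decompose_zero]
  rfl

lemma exists_pow_apply_eq_zero {p : Module.End B X} (p_zero : ∀ x ∈ ℳ 0, p x = 0)
    (p_succ : ∀ j, ∀ x ∈ ℳ (j + 1), p x ∈ ℳ j) (x : X) : ∃ n, (p ^ n) x = 0 := by
  have pow_homogeneous (j : ℕ) : ∀ x ∈ ℳ j, (p ^ (j + 1)) x = 0 := by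
    induction j with
    | zero => simpa using p_zero
    | succ j ih => exact fun x hx => ih _ (p_succ j x hx)
  induction x using DirectSum.Decomposition.inductionOn ℳ with
  | zero => exact ⟨0, rfl⟩
  | @homogeneous j x => exact ⟨j + 1, pow_homogeneous j x x.2⟩
  | add x y hx hy =>
    obtain ⟨m, hm⟩ := hx
    obtain ⟨n, hn⟩ := hy
    exact ⟨max m n, by
      rw [map_add, Module.End.pow_map_zero_of_le (le_max_left m n) hm,
        Module.End.pow_map_zero_of_le (le_max_right m n) hn, add_zero]⟩

lemma nonempty_quotient_range_equiv_of_raises_degree [SetLike.GradedSMul 𝒜 ℳ]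
    (htℳ : ∀ j, ∀ x ∈ ℳ j, t x ∈ ℳ (j + 1)) {q : Module.End B X} (hqt : q * t = 1) :
    Nonempty ((X ⧸ LinearMap.range t) ≃ₗ[B] X ⧸ LinearMap.range (1 - t)) := by
  obtain ⟨p, p_zero, p_succ⟩ := exists_degree_lowering_part 𝒜 ℳ q
  refine nonempty_quotient_range_equiv (q := p) (LinearMap.ext fun x => ?_)
    (exists_pow_apply_eq_zero p_zero fun j x hx => p_succ j x hx ▸ SetLike.coe_mem _)
  induction x using DirectSum.Decomposition.inductionOn ℳ with
  | zero => simp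
  | @homogeneous j x =>
    rw [Module.End.mul_apply, p_succ j _ (htℳ j x x.2), ← Module.End.mul_apply, hqt]
    exact DirectSum.decompose_of_mem_same _ x.2
  | add x y hx hy => rw [map_add, hx, hy, map_add]

end DegreeRaising

section HomogeneousCover

variable {B σ X : Type*} [Ring B] [SetLike σ B] [AddCommGroup X] [Module B X] {𝒜 : ℕ → σ}
  {ℳ : ℕ → AddSubgroup X}

variable (B ℳ) in
/-- The canonical map to a graded module from the free module on its homogeneous elements. -/
noncomputable def homogeneousCover : ((Σ j, ℳ j) →₀ B) →ₗ[B] X :=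
  Finsupp.linearCombination B fun s => (s.2 : X)

lemma homogeneousCover_mem [SetLike.GradedSMul 𝒜 ℳ] (d : ℕ) (f : (Σ j, ℳ j) →₀ B)
    (hf : f ∈ freePiece 𝒜 Sigma.fst d) : homogeneousCover B ℳ f ∈ ℳ d := by
  refine freePiece_le (N := (ℳ d).comap (homogeneousCover B ℳ).toAddMonoidHom) ?_ hf
  rintro i s rfl b hb
  simpa [homogeneousCover] using SetLike.GradedSMul.smul_mem hb s.2.2

section Shift

variable {t : Module.End B X} (htℳ : ∀ j, ∀ x ∈ ℳ j, t x ∈ ℳ (j + 1))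

/-- The map on homogeneous elements given by an endomorphism raising degrees by one. -/
def shift (s : Σ j, ℳ j) : Σ j, ℳ j :=
  ⟨s.1 + 1, t s.2, htℳ s.1 s.2 s.2.2⟩

lemma shift_injective (ht : Function.Injective t) : Function.Injective (shift htℳ) := by
  rintro ⟨i, x⟩ ⟨j, y⟩ h
  obtain ⟨hij, hxy⟩ := Sigma.mk.inj_iff.1 h
  obtain rfl : i = j := Nat.succ_injective hij
  exact congrArg _ (Subtype.ext (ht congr(($(eq_of_heq hxy) : X))))

/-- The lift of a degree-raising endomorphism along `homogeneousCover`. -/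
noncomputable def coverShift : Module.End B ((Σ j, ℳ j) →₀ B) :=
  Finsupp.lmapDomain B B (shift htℳ)

lemma homogeneousCover_coverShift (f : (Σ j, ℳ j) →₀ B) :
    homogeneousCover B ℳ (coverShift htℳ f) = t (homogeneousCover B ℳ f) := by
  induction f using Finsupp.induction_linear with
  | zero => simp
  | add f g hf hg => simp only [map_add, hf, hg]
  | single s b => simp [homogeneousCover, coverShift, shift]

lemma coverShift_mem (d : ℕ) (f : (Σ j, ℳ j) →₀ B) (hf : f ∈ freePiece 𝒜 Sigma.fst d) :
    coverShift htℳ f ∈ freePiece 𝒜 Sigma.fst (d + 1) := by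
  refine freePiece_le (N := (freePiece 𝒜 _ _).comap (coverShift htℳ).toAddMonoidHom) ?_ hf
  rintro i s rfl b hb
  simpa [coverShift, shift, add_assoc] using
    single_mem_freePiece (deg := Sigma.fst) hb (shift htℳ s)

lemma exists_leftInverse_coverShift (ht : Function.Injective t) :
    ∃ q : Module.End B ((Σ j, ℳ j) →₀ B), q * coverShift htℳ = 1 :=
  ⟨Finsupp.lcomapDomain (R := B) _ (shift_injective htℳ ht),
    LinearMap.ext <| Finsupp.leftInverse_lcomapDomain_mapDomain (R := B) (M := B) _
      (shift_injective htℳ ht)⟩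

lemma projective_quotient_range_one_sub_coverShift [AddSubgroupClass σ B] (𝒜 : ℕ → σ)
    [GradedRing 𝒜] (ht : Function.Injective t) :
    Module.Projective B (_ ⧸ LinearMap.range (1 - coverShift htℳ)) := by
  obtain ⟨q, hqs⟩ := exists_leftInverse_coverShift htℳ ht
  obtain ⟨e⟩ :=
    nonempty_quotient_range_equiv_of_raises_degree 𝒜 (coverShift_mem (𝒜 := 𝒜) htℳ) hqs
  have := projective_quotient_range hqs
  exact .of_equiv e

end Shift

variable [DirectSum.Decomposition ℳ]

lemma homogeneousCover_surjective : Function.Surjective (homogeneousCover B ℳ) := fun x => by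
  induction x using DirectSum.Decomposition.inductionOn ℳ with
  | zero => exact ⟨0, map_zero _⟩
  | @homogeneous j x => exact ⟨Finsupp.single ⟨j, x⟩ 1, by simp [homogeneousCover]⟩
  | add x y hx hy =>
    obtain ⟨⟨f, rfl⟩, g, rfl⟩ := And.intro hx hy
    exact ⟨f + g, map_add _ f g⟩

variable (𝒜 ℳ) in
lemma isHomogeneous_ker_homogeneousCover [AddSubgroupClass σ B] [GradedRing 𝒜]
    [SetLike.GradedSMul 𝒜 ℳ] :
    DirectSum.SetLike.IsHomogeneous (freePiece 𝒜 Sigma.fst)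
      (LinearMap.ker (homogeneousCover B ℳ)) := fun d f hf => by
  have h := decompose_map_add (c := 0) (g := (homogeneousCover B ℳ).toAddMonoidHom)
    (homogeneousCover_mem (𝒜 := 𝒜)) f d
  refine h.symm.trans ?_
  rw [LinearMap.toAddMonoidHom_coe, hf, DirectSum.decompose_zero]
  rfl

end HomogeneousCover

theorem hasProjectiveDimensionLE_quotient_range_one_sub {B : Type u} [Ring B] {σ : Type*}
    [SetLike σ B] [AddSubgroupClass σ B] (𝒜 : ℕ → σ) [GradedRing 𝒜] {X : Type u} [AddCommGroup X]
    [Module B X] (ℳ : ℕ → AddSubgroup X) [DirectSum.Decomposition ℳ] [SetLike.GradedSMul 𝒜 ℳ]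
    {t : Module.End B X} (htℳ : ∀ j, ∀ x ∈ ℳ j, t x ∈ ℳ (j + 1)) (ht : Function.Injective t)
    {n : ℕ} (hn : HasProjectiveDimensionLE (ModuleCat.of B (X ⧸ LinearMap.range t)) n) :
    HasProjectiveDimensionLE (ModuleCat.of B (X ⧸ LinearMap.range (1 - t))) n := by
  induction n generalizing X with
  | zero =>
    rw [hasProjectiveDimensionLE_zero_iff] at hn ⊢
    obtain ⟨q, hqt⟩ := exists_leftInverse_of_projective ht
    obtain ⟨e⟩ := nonempty_quotient_range_equiv_of_raises_degree 𝒜 htℳ hqt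
    exact .of_equiv e
  | succ n ih =>
    let g := homogeneousCover B ℳ
    let s := coverShift htℳ
    have hg : Function.Surjective g := homogeneousCover_surjective
    have hst (f) : g (s f) = t (g f) := homogeneousCover_coverShift htℳ f
    obtain ⟨q, hqs⟩ := exists_leftInverse_coverShift htℳ ht
    have hs : Function.Injective s := Function.LeftInverse.injective (DFunLike.congr_fun hqs)
    have := projective_quotient_range hqs
    have := projective_quotient_range_one_sub_coverShift htℳ 𝒜 ht
    let 𝒦 (j : ℕ) : AddSubgroup (LinearMap.ker g) :=
      (freePiece 𝒜 Sigma.fst j).comap (AddSubgroupClass.subtype (LinearMap.ker g))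
    let : DirectSum.Decomposition 𝒦 :=
      (isInternal_comap_subtype (isHomogeneous_ker_homogeneousCover 𝒜 ℳ)).chooseDecomposition
    have : SetLike.GradedSMul 𝒜 𝒦 :=
      ⟨fun {_ _ b x} hb hx => SetLike.GradedSMul.smul_mem (B := freePiece 𝒜 Sigma.fst) hb hx⟩
    refine (hasProjectiveDimensionLE_quotient_range_one_sub_succ_iff_ker hg hst
      (injective_one_sub_of_raises_degree htℳ) n).2 (ih 𝒦 (t := kerRestrict hst) ?_ ?_ ?_)
    · exact fun j f hf => coverShift_mem htℳ j f hf
    · exact fun x y h => Subtype.ext (hs congr(($h : _)))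
    · exact (hasProjectiveDimensionLE_quotient_range_succ_iff_ker hg hst ht n).1 hn

section ReesModule

variable {B σ : Type*} [Ring B] [SetLike σ B] [AddSubgroupClass σ B] (𝒜 : ℕ → σ) [GradedRing 𝒜]
  (M : Type*) [AddCommGroup M] [Module B M]

instance : DirectSum.Gmodule (fun i => 𝒜 i) (fun _ : ℕ => M) where
  smul b m := (b : B) • m
  one_smul x := Sigma.ext (zero_add x.1) (heq_of_eq (one_smul B x.2))
  mul_smul b c x := Sigma.ext (add_assoc b.1 c.1 x.1) (heq_of_eq (mul_smul (b.2 : B) (c.2 : B) x.2))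
  smul_add b := smul_add (b : B)
  smul_zero b := smul_zero (b : B)
  add_smul b c := add_smul (b : B) (c : B)
  zero_smul := zero_smul B

/-- The Rees module `M[T]` of a module over a graded ring, as a module over that ring: a
homogeneous scalar `b` of degree `i` sends `m Tʲ` to `(b • m) Tⁱ⁺ʲ`. -/
def Rees (_ : ℕ → σ) (M : Type*) [AddCommGroup M] : Type _ := DirectSum ℕ fun _ => M

noncomputable instance : AddCommGroup (Rees 𝒜 M) :=
  inferInstanceAs (AddCommGroup (DirectSum ℕ fun _ => M))

noncomputable instance : Module B (Rees 𝒜 M) :=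
  Module.compHom (DirectSum ℕ fun _ => M) (DirectSum.decomposeRingEquiv 𝒜).toRingHom

namespace Rees

variable {M}

/-- The monomial `m Tʲ` of the Rees module. -/
noncomputable def monomial (j : ℕ) : M →+ Rees 𝒜 M := DirectSum.of (fun _ => M) j

variable {𝒜}

lemma smul_monomial {i : ℕ} {b : B} (hb : b ∈ 𝒜 i) (j : ℕ) (m : M) :
    b • monomial 𝒜 j m = monomial 𝒜 (i + j) (b • m) := by
  change DirectSum.decompose 𝒜 b • DirectSum.of (fun _ => M) j m = _
  rw [DirectSum.decompose_of_mem 𝒜 hb]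
  exact DirectSum.Gmodule.of_smul_of (fun i => 𝒜 i) (fun _ => M) _ _

@[elab_as_elim]
lemma induction_on {p : Rees 𝒜 M → Prop} (x : Rees 𝒜 M) (zero : p 0)
    (monomial : ∀ j m, p (monomial 𝒜 j m)) (add : ∀ x y, p x → p y → p (x + y)) : p x :=
  DirectSum.induction_on x zero monomial add

variable {N : Type*} [AddCommGroup N]

/-- The additive map out of a Rees module with prescribed values on the monomials. -/
noncomputable def liftAddHom (f : ℕ → M →+ N) : Rees 𝒜 M →+ N := DirectSum.toAddMonoid f

lemma liftAddHom_monomial (f : ℕ → M →+ N) (j : ℕ) (m : M) :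
    liftAddHom f (monomial 𝒜 j m) = f j m :=
  DirectSum.toAddMonoid_of f j m

variable [Module B N]

/-- The linear map out of a Rees module with prescribed values on the monomials. -/
noncomputable def lift (f : ℕ → M →+ N)
    (hf : ∀ i, ∀ b ∈ 𝒜 i, ∀ j m, f (i + j) (b • m) = b • f j m) : Rees 𝒜 M →ₗ[B] N where
  __ := liftAddHom f
  map_smul' b x := by
    change liftAddHom f (b • x) = b • liftAddHom f x
    induction b using DirectSum.Decomposition.inductionOn 𝒜 with
    | zero => rw [zero_smul, zero_smul, map_zero]
    | add b c hb hc => rw [add_smul, map_add, hb, hc, add_smul]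
    | @homogeneous i b =>
    induction x using Rees.induction_on with
    | zero => rw [smul_zero, map_zero, smul_zero]
    | add x y hx hy => rw [smul_add, map_add, hx, hy, map_add, smul_add]
    | monomial j m =>
      rw [smul_monomial b.2, liftAddHom_monomial, liftAddHom_monomial, hf i b b.2]

lemma lift_monomial (f : ℕ → M →+ N)
    (hf : ∀ i, ∀ b ∈ 𝒜 i, ∀ j m, f (i + j) (b • m) = b • f j m) (j : ℕ) (m : M) :
    lift f hf (monomial 𝒜 j m) = f j m :=
  liftAddHom_monomial f j m

variable (𝒜 M) in
/-- Multiplication by `T`. -/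
noncomputable def mulT : Module.End B (Rees 𝒜 M) :=
  lift (fun j => monomial 𝒜 (j + 1)) fun _ _ hb j m => (smul_monomial hb (j + 1) m).symm

lemma mulT_monomial (j : ℕ) (m : M) : mulT 𝒜 M (monomial 𝒜 j m) = monomial 𝒜 (j + 1) m :=
  lift_monomial (fun j => monomial 𝒜 (j + 1)) _ j m

lemma mulT_injective : Function.Injective (mulT 𝒜 M) := by
  let divT : Rees 𝒜 M →+ Rees 𝒜 M := liftAddHom fun
    | 0 => 0
    | j + 1 => monomial 𝒜 j
  refine Function.LeftInverse.injective (g := divT) fun x => ?_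
  induction x using Rees.induction_on with
  | zero => rw [map_zero, map_zero]
  | add x y hx hy => rw [map_add, map_add, hx, hy]
  | monomial j m => rw [mulT_monomial, liftAddHom_monomial]

variable (𝒜 M) in
/-- The degree `j` piece `M Tʲ` of the Rees module. -/
noncomputable abbrev piece (j : ℕ) : AddSubgroup (Rees 𝒜 M) := (monomial 𝒜 j).range

noncomputable instance : DirectSum.Decomposition (piece 𝒜 M) := by
  let split : Rees 𝒜 M →+ DirectSum ℕ (piece 𝒜 M ·) :=
    liftAddHom fun j => (DirectSum.of (piece 𝒜 M ·) j).comp (monomial 𝒜 j).rangeRestrict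
  have split_monomial (j : ℕ) (m : M) : split (monomial 𝒜 j m) =
      DirectSum.of (piece 𝒜 M ·) j ((monomial 𝒜 j).rangeRestrict m) :=
    liftAddHom_monomial _ j m
  refine .ofAddHom _ split (AddMonoidHom.ext fun x => ?_) ?_
  · induction x using Rees.induction_on with
    | zero => rw [map_zero, map_zero]
    | add x y hx hy => rw [map_add, hx, hy, map_add]
    | monomial j m =>
      rw [AddMonoidHom.comp_apply, split_monomial, DirectSum.coeAddMonoidHom_of]
      rfl
  · ext j ⟨_, m, rfl⟩ : 2
    simp only [AddMonoidHom.comp_apply, DirectSum.coeAddMonoidHom_of, split_monomial]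
    rfl

instance : SetLike.GradedSMul 𝒜 (piece 𝒜 M) where
  smul_mem := by
    rintro i j b _ hb ⟨m, rfl⟩
    exact ⟨b • m, (smul_monomial hb j m).symm⟩

lemma mulT_mem_piece (j : ℕ) (x : Rees 𝒜 M) (hx : x ∈ piece 𝒜 M j) :
    mulT 𝒜 M x ∈ piece 𝒜 M (j + 1) := by
  obtain ⟨m, rfl⟩ := hx
  exact ⟨m, (mulT_monomial j m).symm⟩

variable (𝒜 M) in
lemma nonempty_quotient_range_one_sub_mulT_equiv :
    Nonempty ((Rees 𝒜 M ⧸ LinearMap.range (1 - mulT 𝒜 M)) ≃ₗ[B] M) := by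
  let ev : Rees 𝒜 M →ₗ[B] M := lift (fun _ => .id M) fun _ _ _ _ _ => rfl
  have ev_monomial (j : ℕ) (m : M) : ev (monomial 𝒜 j m) = m := lift_monomial _ _ j m
  refine nonempty_quotient_range_equiv_of_section (g := ev) (s := monomial 𝒜 0)
    (ev_monomial 0) (LinearMap.ext fun x => ?_) fun x => ?_
  · rw [LinearMap.comp_apply, LinearMap.sub_apply, map_sub, Module.End.one_apply,
      LinearMap.zero_apply, sub_eq_zero]
    induction x using Rees.induction_on with
    | zero => simp only [map_zero]
    | add x y hx hy => rw [map_add, map_add, map_add, hx, hy]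
    | monomial j m => rw [mulT_monomial, ev_monomial, ev_monomial]
  · induction x using Rees.induction_on with
    | zero => simp only [map_zero, sub_zero, zero_mem]
    | add x y hx hy => simpa only [map_add, add_sub_add_comm] using add_mem hx hy
    | monomial j m =>
      rw [ev_monomial]
      induction j with
      | zero => simp only [sub_self, zero_mem]
      | succ j ih =>
        have hstep : monomial 𝒜 (j + 1) m - monomial 𝒜 j m ∈
            LinearMap.range (1 - mulT 𝒜 M) :=
          ⟨-monomial 𝒜 j m, by simp [mulT_monomial, neg_add_eq_sub]⟩
        simpa only [sub_add_sub_cancel] using add_mem hstep ih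

lemma nonempty_quotient_range_mulT_equiv {e : M ≃+ N}
    (he : ∀ b m, e (GradedRing.proj 𝒜 0 b • m) = b • e m) :
    Nonempty ((Rees 𝒜 M ⧸ LinearMap.range (mulT 𝒜 M)) ≃ₗ[B] N) := by
  let f : ℕ → M →+ N
    | 0 => e
    | _ + 1 => 0
  have hf : ∀ i, ∀ b ∈ 𝒜 i, ∀ j m, f (i + j) (b • m) = b • f j m := by
    rintro i b hb (_ | _) m
    · change f i (b • m) = b • e m
      rw [← he, GradedRing.proj_apply]
      cases i with
      | zero => rw [DirectSum.decompose_of_mem_same 𝒜 hb]; rfl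
      | succ i => rw [DirectSum.decompose_of_mem_ne 𝒜 hb i.succ_ne_zero, zero_smul, map_zero]; rfl
    · exact (smul_zero b).symm
  let g : Rees 𝒜 M →ₗ[B] N := lift f hf
  have g_monomial (j : ℕ) (m : M) : g (monomial 𝒜 j m) = f j m := lift_monomial f hf j m
  refine nonempty_quotient_range_equiv_of_section (g := g)
    (s := (monomial 𝒜 0).comp e.symm.toAddMonoidHom) (fun n => ?_)
    (LinearMap.ext fun x => ?_) fun x => ?_
  · exact (g_monomial 0 _).trans (e.apply_symm_apply n)
  · rw [LinearMap.comp_apply, LinearMap.zero_apply]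
    induction x using Rees.induction_on with
    | zero => rw [map_zero, map_zero]
    | add x y hx hy => rw [map_add, map_add, hx, hy, add_zero]
    | monomial j m => rw [mulT_monomial, g_monomial]; rfl
  · induction x using Rees.induction_on with
    | zero => simp only [map_zero, sub_zero, zero_mem]
    | add x y hx hy => simpa only [map_add, add_sub_add_comm] using add_mem hx hy
    | monomial j m =>
      rw [g_monomial]
      cases j with
      | zero => simp [f]
      | succ j => exact ⟨monomial 𝒜 j m, by simp [f, mulT_monomial]⟩

end Rees

theorem hasProjectiveDimensionLE_of_addEquiv_degenerate {B : Type u} [Ring B] {σ : Type*}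
    [SetLike σ B] [AddSubgroupClass σ B] {𝒜 : ℕ → σ} [GradedRing 𝒜] {M N : Type u}
    [AddCommGroup M] [Module B M] [AddCommGroup N] [Module B N] {e : M ≃+ N}
    (he : ∀ b m, e (GradedRing.proj 𝒜 0 b • m) = b • e m) {n : ℕ}
    (hN : HasProjectiveDimensionLE (ModuleCat.of B N) n) :
    HasProjectiveDimensionLE (ModuleCat.of B M) n := by
  obtain ⟨e₀⟩ := Rees.nonempty_quotient_range_mulT_equiv he
  obtain ⟨e₁⟩ := Rees.nonempty_quotient_range_one_sub_mulT_equiv 𝒜 M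
  refine hasProjectiveDimensionLE_of_retract e₁.comp_symm ?_
  refine hasProjectiveDimensionLE_quotient_range_one_sub 𝒜 (Rees.piece 𝒜 M) Rees.mulT_mem_piece
    Rees.mulT_injective ?_
  exact hasProjectiveDimensionLE_of_retract e₀.symm_comp hN

end ReesModule

section ExternalTensor

variable {k : Type*} [CommRing k] {A U : Type*} [Ring A] [Algebra k A] [Ring U] [Algebra k U]

/-- The external tensor product over `k` of an `A`-module and a `U`-module, as a module over
`A ⊗[k] U`. A type synonym: `N ⊗[k] M` itself may already carry other actions. -/
def ExternalTensor (k N M : Type*) [CommRing k] [AddCommGroup N] [AddCommGroup M] [Module k N]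
    [Module k M] : Type _ := N ⊗[k] M

namespace ExternalTensor

variable {N M Y : Type*} [AddCommGroup N] [Module k N] [AddCommGroup M] [Module k M]
  [AddCommGroup Y]

noncomputable instance : AddCommGroup (ExternalTensor k N M) :=
  inferInstanceAs (AddCommGroup (N ⊗[k] M))

variable (k) in
/-- A pure tensor. -/
def tmul (n : N) (m : M) : ExternalTensor k N M := n ⊗ₜ[k] m

@[elab_as_elim]
lemma induction_on {p : ExternalTensor k N M → Prop} (x : ExternalTensor k N M) (zero : p 0)
    (tmul : ∀ n m, p (tmul k n m)) (add : ∀ x y, p x → p y → p (x + y)) : p x :=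
  TensorProduct.induction_on x zero tmul add

variable [Module A N] [IsScalarTower k A N] [Module U M] [IsScalarTower k U M]

noncomputable instance : Module A (ExternalTensor k N M) := inferInstanceAs (Module A (N ⊗[k] M))

lemma smul_tmul (a : A) (n : N) (m : M) : a • tmul k n m = tmul k (a • n) m := rfl

noncomputable instance : Module (A ⊗[k] U) (ExternalTensor k N M) :=
  Module.compHom (N ⊗[k] M) <| RingHomClass.toRingHom <|
    (Module.endTensorEndAlgHom (R := k) (S := k) (A := k)).comp
      (Algebra.TensorProduct.map (Algebra.lsmul k k N) (Algebra.lsmul k k M) :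
        A ⊗[k] U →ₐ[k] _)

lemma tmul_smul_tmul (a : A) (u : U) (n : N) (m : M) :
    (a ⊗ₜ[k] u) • tmul k n m = tmul k (a • n) (u • m) := rfl

instance : IsScalarTower A (A ⊗[k] U) (ExternalTensor k N M) where
  smul_assoc a r x := by
    induction r using TensorProduct.induction_on with
    | zero => rw [smul_zero, zero_smul, smul_zero]
    | add r s hr hs => rw [smul_add, add_smul, hr, hs, add_smul, smul_add]
    | tmul b u =>
      induction x using ExternalTensor.induction_on with
      | zero => rw [smul_zero, smul_zero, smul_zero]
      | add x y hx hy => simp only [smul_add, hx, hy]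
      | tmul n m =>
        rw [TensorProduct.smul_tmul', tmul_smul_tmul, tmul_smul_tmul, smul_tmul, smul_assoc]

/-- An additive map out of an external tensor product is linear over `A ⊗[k] U` as soon as it
commutes with the action of pure tensors on pure tensors. -/
def linearMapOfTmul [Module (A ⊗[k] U) Y] (φ : ExternalTensor k N M →+ Y)
    (hφ : ∀ (a : A) (u : U) n m, φ (tmul k (a • n) (u • m)) = (a ⊗ₜ[k] u) • φ (tmul k n m)) :
    ExternalTensor k N M →ₗ[A ⊗[k] U] Y where
  __ := φ
  map_smul' r x := by
    change φ (r • x) = r • φ x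
    induction r using TensorProduct.induction_on with
    | zero => rw [zero_smul, zero_smul, map_zero]
    | add r s hr hs => rw [add_smul, map_add, hr, hs, add_smul]
    | tmul a u =>
      induction x using ExternalTensor.induction_on with
      | zero => rw [smul_zero, map_zero, smul_zero]
      | add x y hx hy => rw [smul_add, map_add, hx, hy, map_add, smul_add]
      | tmul n m => rw [tmul_smul_tmul, hφ]

variable {N' M' : Type*} [AddCommGroup N'] [Module k N'] [AddCommGroup M'] [Module k M']
  [Module A N'] [IsScalarTower k A N'] [Module U M'] [IsScalarTower k U M']

variable (k) in
/-- Functoriality of the external tensor product in both variables. -/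
noncomputable def map (f : N →ₗ[A] N') (g : M →ₗ[U] M') :
    ExternalTensor k N M →ₗ[A ⊗[k] U] ExternalTensor k N' M' :=
  linearMapOfTmul
    (TensorProduct.map (f.restrictScalars k) (g.restrictScalars k)).toAddMonoidHom
    fun a u n m => congrArg₂ (tmul k) (f.map_smul a n) (g.map_smul u m)

lemma map_tmul (f : N →ₗ[A] N') (g : M →ₗ[U] M') (n : N) (m : M) :
    map k f g (tmul k n m) = tmul k (f n) (g m) := rfl

lemma map_injective [Module.Flat k M] {f : N →ₗ[A] N'} (hf : Function.Injective f) :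
    Function.Injective (map k f (.id : M →ₗ[U] M)) :=
  Module.Flat.rTensor_preserves_injective_linearMap (M := M) (f.restrictScalars k) hf

lemma map_surjective {f : N →ₗ[A] N'} (hf : Function.Surjective f) :
    Function.Surjective (map k f (.id : M →ₗ[U] M)) :=
  LinearMap.rTensor_surjective M (g := f.restrictScalars k) hf

lemma map_exact {N'' : Type*} [AddCommGroup N''] [Module k N''] [Module A N'']
    [IsScalarTower k A N''] {f : N →ₗ[A] N'} {g : N' →ₗ[A] N''} (hfg : Function.Exact f g)
    (hg : Function.Surjective g) :
    Function.Exact (map k f (.id : M →ₗ[U] M)) (map k g (.id : M →ₗ[U] M)) :=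
  rTensor_exact M (f := f.restrictScalars k) (g := g.restrictScalars k) hfg hg

lemma map_comp_map_eq_id {f : N →ₗ[A] N'} {g : M →ₗ[U] M'} {f' : N' →ₗ[A] N}
    {g' : M' →ₗ[U] M} (hf : f' ∘ₗ f = .id) (hg : g' ∘ₗ g = .id) :
    map k f' g' ∘ₗ map k f g = .id := by
  ext x
  induction x using ExternalTensor.induction_on with
  | zero => simp only [map_zero]
  | add x y hx hy => rw [map_add, map_add, hx, hy]
  | tmul n m =>
    rw [LinearMap.comp_apply, map_tmul, map_tmul]
    exact congrArg₂ (tmul k) (LinearMap.congr_fun hf n) (LinearMap.congr_fun hg m)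

variable (k A U) in
/-- The external tensor product of free modules is free. -/
noncomputable def finsuppEquiv (ι κ : Type*) :
    ExternalTensor k (ι →₀ A) (κ →₀ U) ≃ₗ[A ⊗[k] U] (ι × κ →₀ A ⊗[k] U) :=
  let e := finsuppTensorFinsupp k k A U ι κ
  .ofBijective (linearMapOfTmul e.toLinearMap.toAddMonoidHom fun a u f g => by
    change e ((a • f) ⊗ₜ (u • g)) = _ • e (f ⊗ₜ g)
    ext ⟨i, j⟩
    simp [e, finsuppTensorFinsupp_apply]) e.bijective

instance projective [Module.Projective A N] [Module.Projective U M] :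
    Module.Projective (A ⊗[k] U) (ExternalTensor k N M) := by
  obtain ⟨s, hs⟩ := (Module.projective_def' (R := A) (P := N)).1 inferInstance
  obtain ⟨s', hs'⟩ := (Module.projective_def' (R := U) (P := M)).1 inferInstance
  have : Module.Projective (A ⊗[k] U) (ExternalTensor k (N →₀ A) (M →₀ U)) :=
    .of_equiv (finsuppEquiv k A U N M).symm
  exact .of_split _ _ (map_comp_map_eq_id hs hs')

end ExternalTensor

end ExternalTensor

section HasProjectiveDimension

variable {R S : Type u} [Ring R] [Ring S] [Module R S]

lemma projective_of_isScalarTower {X : Type*} [AddCommGroup X] [Module R X] [Module S X]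
    [IsScalarTower R S S] [IsScalarTower R S X] [Module.Projective R S] [Module.Projective S X] :
    Module.Projective R X := by
  classical
  obtain ⟨s, hs⟩ := (Module.projective_def' (R := S) (P := X)).1 inferInstance
  have : Module.Projective R (X →₀ S) :=
    Module.Projective.of_equiv (finsuppLEquivDirectSum R S X).symm
  exact .of_split (s.restrictScalars R) ((Finsupp.linearCombination S id).restrictScalars R)
    (LinearMap.ext fun x => LinearMap.congr_fun hs x)

lemma hasProjectiveDimensionLE_of_isScalarTower [IsScalarTower R S S] [Module.Projective R S]
    {X : Type u} [AddCommGroup X] [Module R X] [Module S X] [IsScalarTower R S X] {n : ℕ}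
    (hX : HasProjectiveDimensionLE (ModuleCat.of S X) n) :
    HasProjectiveDimensionLE (ModuleCat.of R X) n := by
  induction n generalizing X with
  | zero =>
    rw [hasProjectiveDimensionLE_zero_iff] at hX ⊢
    exact projective_of_isScalarTower (S := S)
  | succ n ih =>
    let φ : (X →₀ S) →ₗ[S] X := Finsupp.linearCombination S id
    have hφ : Function.Surjective φ := Finsupp.linearCombination_id_surjective S X
    have : Module.Projective R (X →₀ S) := projective_of_isScalarTower (S := S)
    exact (hasProjectiveDimensionLE_succ_iff (g := φ.restrictScalars R)
      (f := (LinearMap.ker φ).subtype.restrictScalars R) (Submodule.subtype_injective _)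
      (LinearMap.exact_subtype_ker_map φ) hφ n).2
      (ih ((hasProjectiveDimensionLE_succ_iff_ker hφ n).1 hX))

variable {k : Type*} [CommRing k] {A U : Type u} [Ring A] [Algebra k A] [Ring U] [Algebra k U]
  {N M : Type u} [AddCommGroup N] [Module k N] [Module A N] [IsScalarTower k A N]
  [AddCommGroup M] [Module k M] [Module U M] [IsScalarTower k U M]

open ExternalTensor in
lemma hasProjectiveDimensionLE_externalTensor [Module.Flat k M] [Module.Projective U M] {n : ℕ}
    (hN : HasProjectiveDimensionLE (ModuleCat.of A N) n) :
    HasProjectiveDimensionLE (ModuleCat.of (A ⊗[k] U) (ExternalTensor k N M)) n := by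
  induction n generalizing N with
  | zero =>
    rw [hasProjectiveDimensionLE_zero_iff] at hN ⊢
    infer_instance
  | succ n ih =>
    let φ : (N →₀ A) →ₗ[A] N := Finsupp.linearCombination A id
    have hφ : Function.Surjective φ := Finsupp.linearCombination_id_surjective A N
    exact (hasProjectiveDimensionLE_succ_iff (map_injective (Submodule.subtype_injective _))
      (map_exact (LinearMap.exact_subtype_ker_map φ) hφ) (map_surjective hφ) n).2
      (ih ((hasProjectiveDimensionLE_succ_iff_ker hφ n).1 hN))

lemma hasProjectiveDimensionLE_of_externalTensor [Module.Projective k U] {l : M →ₗ[k] k} {m₀ : M}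
    (hl : l m₀ = 1) {n : ℕ}
    (hNM : HasProjectiveDimensionLE (ModuleCat.of (A ⊗[k] U) (ExternalTensor k N M)) n) :
    HasProjectiveDimensionLE (ModuleCat.of A N) n := by
  let i : N →ₗ[A] ExternalTensor k N M := AlgebraTensorModule.mk k A N M |>.flip m₀
  let r : ExternalTensor k N M →ₗ[A] N :=
    (AlgebraTensorModule.rid k A N).toLinearMap ∘ₗ AlgebraTensorModule.lTensor A N l
  refine hasProjectiveDimensionLE_of_retract (i := i) (r := r) (LinearMap.ext fun n => ?_)
    (hasProjectiveDimensionLE_of_isScalarTower hNM)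
  change l m₀ • n = n
  rw [hl, one_smul]

end HasProjectiveDimension

section TensorGrading

variable {k A U : Type*} [CommRing k] [Ring A] [Algebra k A] [Ring U] [Algebra k U]
  {𝒜 : ℕ → Submodule k A}

lemma tmul_mem_decomposeTensor {i : ℕ} {a : A} (ha : a ∈ 𝒜 i) (u : U) :
    a ⊗ₜ[k] u ∈ DirectSum.decomposeTensor 𝒜 U i :=
  ⟨⟨a, ha⟩ ⊗ₜ u, rfl⟩

variable [GradedAlgebra 𝒜]

instance : SetLike.GradedMonoid (DirectSum.decomposeTensor 𝒜 U) where
  one_mem := tmul_mem_decomposeTensor (SetLike.one_mem_graded 𝒜) 1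
  mul_mem := by
    rintro i j _ _ ⟨x, rfl⟩ ⟨y, rfl⟩
    induction x using TensorProduct.induction_on with
    | zero => simp only [map_zero, zero_mul, zero_mem]
    | add x x' hx hx' =>
      rw [map_add, add_mul]
      exact add_mem hx hx'
    | tmul a u =>
      induction y using TensorProduct.induction_on with
      | zero => simp only [map_zero, mul_zero, zero_mem]
      | add y y' hy hy' =>
        rw [map_add, mul_add]
        exact add_mem hy hy'
      | tmul b v =>
        rw [LinearMap.rTensor_tmul, LinearMap.rTensor_tmul, Algebra.TensorProduct.tmul_mul_tmul]
        exact tmul_mem_decomposeTensor (SetLike.mul_mem_graded a.2 b.2) (u * v)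

noncomputable instance : GradedAlgebra (DirectSum.decomposeTensor 𝒜 U) where
  __ := DirectSum.tensorDecomposition 𝒜 U

lemma proj_decomposeTensor_tmul (i : ℕ) (a : A) (u : U) :
    GradedRing.proj (DirectSum.decomposeTensor 𝒜 U) i (a ⊗ₜ u) = GradedRing.proj 𝒜 i a ⊗ₜ u := by
  induction a using DirectSum.Decomposition.inductionOn 𝒜 with
  | zero => rw [TensorProduct.zero_tmul, map_zero, map_zero, TensorProduct.zero_tmul]
  | add a b ha hb =>
    rw [TensorProduct.add_tmul, map_add, map_add, TensorProduct.add_tmul, ha, hb]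
  | @homogeneous j a =>
    have hau := tmul_mem_decomposeTensor a.2 u
    rw [GradedRing.proj_apply, GradedRing.proj_apply]
    obtain rfl | hij := eq_or_ne j i
    · rw [DirectSum.decompose_of_mem_same _ a.2, DirectSum.decompose_of_mem_same _ hau]
    · rw [DirectSum.decompose_of_mem_ne _ a.2 hij, DirectSum.decompose_of_mem_ne _ hau hij,
        TensorProduct.zero_tmul]

lemma proj_zero_eq_algebraMap (hconn : 𝒜 0 = 1) {ε : A →ₐ[k] k}
    (hε : ∀ i, 0 < i → ∀ a ∈ 𝒜 i, ε a = 0) (a : A) :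
    GradedRing.proj 𝒜 0 a = algebraMap k A (ε a) := by
  induction a using DirectSum.Decomposition.inductionOn 𝒜 with
  | zero => simp only [map_zero]
  | add a b ha hb => simp only [map_add, ha, hb]
  | @homogeneous j a =>
    rw [GradedRing.proj_apply]
    cases j with
    | zero =>
      have ha : (a : A) ∈ (1 : Submodule k A) := by rw [← hconn]; exact a.2
      obtain ⟨c, hc⟩ := Submodule.mem_one.1 ha
      rw [DirectSum.decompose_of_mem_same _ a.2, ← hc, AlgHom.commutes,
        Algebra.algebraMap_self_apply]
    | succ j =>
      rw [DirectSum.decompose_of_mem_ne _ a.2 j.succ_ne_zero, hε _ j.succ_pos a a.2, map_zero]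

end TensorGrading

section TensorProduct

variable {k A U : Type u} [Field k] [Ring A] [Algebra k A] [Ring U] [Algebra k U]

theorem hasProjectiveDimensionLE_tensorProduct [IsSemisimpleRing U] {𝒜 : ℕ → Submodule k A}
    [GradedAlgebra 𝒜] {ε : A →ₐ[k] k}
    (hε : ∀ a, GradedRing.proj 𝒜 0 a = algebraMap k A (ε a)) [Module A k]
    (hsmul : ∀ (a : A) (c : k), a • c = ε a * c) {n : ℕ}
    (hk : HasProjectiveDimensionLE (ModuleCat.of A k) n) (M : ModuleCat.{u} (A ⊗[k] U)) :
    HasProjectiveDimensionLE M n := by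
  have : IsScalarTower k A k := .of_algebraMap_smul fun c x => by
    rw [hsmul, AlgHom.commutes, Algebra.algebraMap_self_apply, smul_eq_mul]
  let : Module U M := .compHom M (Algebra.TensorProduct.includeRight : U →ₐ[k] A ⊗[k] U).toRingHom
  let : Module k M := .compHom M (algebraMap k U)
  have : IsScalarTower k U M := .of_algebraMap_smul fun _ _ => rfl
  let e : M ≃+ ExternalTensor k k M := (TensorProduct.lid k M).symm.toAddEquiv
  have : Module.Projective U M := Module.projective_of_isSemisimpleRing U M
  refine hasProjectiveDimensionLE_of_addEquiv_degenerate (𝒜 := DirectSum.decomposeTensor 𝒜 U)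
    (e := e) (fun b m => ?_) (hasProjectiveDimensionLE_externalTensor hk)
  induction b using TensorProduct.induction_on with
  | zero => rw [map_zero, zero_smul, map_zero, zero_smul]
  | add b c hb hc => rw [map_add, add_smul, map_add, hb, hc, add_smul]
  | tmul a u =>
    calc e (GradedRing.proj (DirectSum.decomposeTensor 𝒜 U) 0 (a ⊗ₜ u) • m)
      _ = e ((1 ⊗ₜ[k] (ε a • u) : A ⊗[k] U) • m) := by
        rw [proj_decomposeTensor_tmul, hε, Algebra.algebraMap_eq_smul_one,
          TensorProduct.smul_tmul]
      _ = .tmul k 1 (ε a • (u • m)) := congrArg (ExternalTensor.tmul k 1) (smul_assoc (ε a) u m)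
      _ = .tmul k (ε a • 1) (u • m) := (TensorProduct.smul_tmul (ε a) (1 : k) (u • m)).symm
      _ = .tmul k (a • 1) (u • m) := by rw [hsmul, smul_eq_mul]

theorem hasProjectiveDimensionLE_of_tensorProduct [Nontrivial U] {n : ℕ}
    (h : ∀ M : ModuleCat.{u} (A ⊗[k] U), HasProjectiveDimensionLE M n) (N : ModuleCat.{u} A) :
    HasProjectiveDimensionLE N n := by
  let : Module k N := .compHom N (algebraMap k A)
  have : IsScalarTower k A N := .of_algebraMap_smul fun _ _ => rfl
  obtain ⟨l, hl⟩ := Module.Projective.exists_dual_eq_one k (one_ne_zero (α := U))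
  exact hasProjectiveDimensionLE_of_externalTensor hl (h (.of _ (ExternalTensor k N U)))

end TensorProduct

end GradedGlobalDim

theorem stmt_13_general (k : Type u) [Field k] (A : Type u) [Ring A] [Algebra k A]
    (𝒜 : ℕ → Submodule k A) [GradedAlgebra 𝒜]
    (hconn : 𝒜 0 = (1 : Submodule k A))
    (ε : A →ₐ[k] k)
    (hker : RingHom.ker ε.toRingHom = Ideal.span {x : A | ∃ i, 0 < i ∧ x ∈ 𝒜 i})
    [Module A k] (hsmul : ∀ (a : A) (c : k), a • c = ε a * c)
    (U : Type u) [Ring U] [IsSemisimpleRing U] [Nontrivial U] [Algebra k U] :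
    Ring.globalDim (A ⊗[k] U) = ModuleCat.projDim (ModuleCat.of A k) ∧
      Ring.globalDim (A ⊗[k] U) = Ring.globalDim A := by
  have hε (i : ℕ) (hi : 0 < i) (a : A) (ha : a ∈ 𝒜 i) : ε a = 0 := by
    have : a ∈ RingHom.ker ε.toRingHom := hker ▸ Ideal.subset_span ⟨i, hi, ha⟩
    exact this
  have tensor_le_trivial : Ring.globalDim (A ⊗[k] U) ≤ ModuleCat.projDim (ModuleCat.of A k) :=
    WithTop.forall_le_coe_iff_le.1 fun n hn => (GradedGlobalDim.globalDim_le_iff n).2 <|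
      GradedGlobalDim.hasProjectiveDimensionLE_tensorProduct
        (GradedGlobalDim.proj_zero_eq_algebraMap hconn hε) hsmul
        ((GradedGlobalDim.projDim_le_iff _ n).1 hn)
  have base_le_tensor : Ring.globalDim A ≤ Ring.globalDim (A ⊗[k] U) :=
    WithTop.forall_le_coe_iff_le.1 fun n hn => (GradedGlobalDim.globalDim_le_iff n).2 <|
      GradedGlobalDim.hasProjectiveDimensionLE_of_tensorProduct
        ((GradedGlobalDim.globalDim_le_iff n).1 hn)
  have trivial_le_base : ModuleCat.projDim (ModuleCat.of A k) ≤ Ring.globalDim A :=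
    le_iSup (fun M : ModuleCat.{u} A => M.projDim) (ModuleCat.of A k)
  exact ⟨tensor_le_trivial.antisymm (trivial_le_base.trans base_le_tensor),
    (tensor_le_trivial.trans trivial_le_base).antisymm base_le_tensor⟩

/-- Lemma 5.1: for a connected graded `k`-algebra `A` and a division `k`-algebra
`U`, the (ungraded, left) global dimension of `A ⊗[k] U` equals the projective dimension of the
trivial left `A`-module `k`; in particular `gldim (A ⊗[k] U) = gldim A`. -/
theorem stmt_13 (k : Type u) [Field k] (A : Type u) [Ring A] [Algebra k A]
    (𝒜 : ℕ → Submodule k A) [GradedAlgebra 𝒜]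
    (hconn : 𝒜 0 = (1 : Submodule k A))
    (ε : A →ₐ[k] k)
    (hker : RingHom.ker ε.toRingHom = Ideal.span {x : A | ∃ i, 0 < i ∧ x ∈ 𝒜 i})
    [Module A k] (hsmul : ∀ (a : A) (c : k), a • c = ε a * c)
    (U : Type u) [DivisionRing U] [Algebra k U] :
    Ring.globalDim (A ⊗[k] U) = ModuleCat.projDim (ModuleCat.of A k) ∧
      Ring.globalDim (A ⊗[k] U) = Ring.globalDim A :=
  stmt_13_general k A 𝒜 hconn ε hker hsmul U
end

section
/- Let J be the kernel of the multiplication map μ: F ⊗_k F → F. Then there exists an infinite sequence (e_i)_{i=1}^∞ of nonzero pairwise orthogonal idempotents in F ⊗_k F such that J is the internal direct sum ⊕_{i=1}^∞ e_i·(F ⊗_k F) of the ideals e_i·(F ⊗_k F). -/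
open CategoryTheory Limits TensorProduct

universe u

/-!
Write `d a = 1 ⊗ₜ a - a ⊗ₜ 1`. The elements `1 ⊗ₜ a` and `a ⊗ₜ 1` are roots of the same separable
polynomial `p`, so Taylor's formula `0 = p'(a ⊗ₜ 1) * d a + r * d a ^ 2`, in which `p'(a ⊗ₜ 1)` is a
unit, shows that `d a` is divisible by its square and hence generates the same ideal as some
idempotent. As `J` is generated by the `d a` with `a` in a countable generating set, it is generated
by countably many idempotents, which can be made disjoint in the Boolean algebra of idempotents.

Infinitely many of them remain nonzero: otherwise `J` is finitely generated, hence `J = (e)` with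
`e` idempotent, and `t = 1 - e` satisfies `(1 ⊗ₜ a) * t = (a ⊗ₜ 1) * t` and `μ t = 1`. Expanding the
left factors of `(a ⊗ₜ 1) * t` along a dual basis then writes every `a` as a combination of finitely
many fixed elements.
-/

section OrthogonalIdempotents

variable {R : Type*} [CommRing R]

lemma iSupIndep_span_singleton_of_orthogonalIdempotents {ι : Type*} {e : ι → R}
    (he : OrthogonalIdempotents e) : iSupIndep fun i => Ideal.span {e i} := by
  intro i
  have others_le : ⨆ j, ⨆ (_ : j ≠ i), Ideal.span {e j} ≤ (Ideal.span {e i}).annihilator := by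
    refine iSup₂_le fun j hji => (Ideal.span_singleton_le_iff_mem _).2 ?_
    exact (Submodule.mem_annihilator_span_singleton _ _).2 (he.ortho hji)
  rw [Submodule.disjoint_def]
  intro x hx hx_others
  obtain ⟨c, rfl⟩ := Ideal.mem_span_singleton.1 hx
  have : e i * c * e i = 0 := (Submodule.mem_annihilator_span_singleton _ _).1 (others_le hx_others)
  linear_combination this - c * (he.idem i).eq

lemma idempotent_sup_mem_ideal_iff (I : Ideal R) (a b : {a : R // IsIdempotentElem a}) :
    (a ⊔ b : {a : R // IsIdempotentElem a}).1 ∈ I ↔ a.1 ∈ I ∧ b.1 ∈ I := by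
  have mem_of_le {a b : {a : R // IsIdempotentElem a}} (hab : a ≤ b) (hb : b.1 ∈ I) : a.1 ∈ I :=
    (show a.1 * b.1 = a.1 from hab) ▸ I.mul_mem_left _ hb
  refine ⟨fun h => ⟨mem_of_le le_sup_left h, mem_of_le le_sup_right h⟩, fun ⟨ha, hb⟩ => ?_⟩
  exact I.sub_mem (I.add_mem ha hb) (I.mul_mem_right _ ha)

lemma orthogonalIdempotents_disjointed (f : ℕ → {a : R // IsIdempotentElem a}) :
    OrthogonalIdempotents fun n => (disjointed f n).1 where
  idem n := (disjointed f n).2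
  ortho _ _ hmn := congrArg Subtype.val (disjoint_disjointed f hmn).eq_bot

lemma iSup_span_disjointed (f : ℕ → {a : R // IsIdempotentElem a}) :
    ⨆ n, Ideal.span {(disjointed f n).1} = ⨆ n, Ideal.span {(f n).1} := by
  have mem_iff_partialSups (g : ℕ → {a : R // IsIdempotentElem a}) (I : Ideal R) :
      (∀ n, (g n).1 ∈ I) ↔ ∀ n, (partialSups g n).1 ∈ I := by
    simp only [partialSups_iff_forall (fun a : {a : R // IsIdempotentElem a} => a.1 ∈ I)
      (idempotent_sup_mem_ideal_iff I _ _)]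
    exact ⟨fun h _ k _ => h k, fun h n => h n n le_rfl⟩
  refine eq_of_forall_ge_iff fun I => ?_
  simp only [iSup_le_iff, Ideal.span_singleton_le_iff_mem]
  rw [mem_iff_partialSups, partialSups_disjointed, ← mem_iff_partialSups]

lemma exists_nat_orthogonalIdempotents_of_not_fg {e : ℕ → R} (he : OrthogonalIdempotents e)
    (hfg : ¬ (⨆ n, Ideal.span {e n}).FG) :
    ∃ e' : ℕ → R, (∀ n, e' n ≠ 0) ∧ OrthogonalIdempotents e' ∧
      ⨆ n, Ideal.span {e' n} = ⨆ n, Ideal.span {e n} := by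
  let support := {n // Ideal.span {e n} ≠ ⊥}
  have iSup_support : ⨆ n : support, Ideal.span {e n} = ⨆ n, Ideal.span {e n} :=
    iSup_ne_bot_subtype _
  have : Infinite support := by
    by_contra hfin
    rw [not_infinite_iff_finite] at hfin
    exact hfg (iSup_support ▸ Submodule.fg_iSup _ fun n => Submodule.fg_span_singleton _)
  obtain ⟨σ⟩ := nonempty_equiv_of_countable (α := ℕ) (β := support)
  refine ⟨fun n => e (σ n), fun n => ?_, ?_, ?_⟩
  · exact fun h => (σ n).2 (Ideal.span_singleton_eq_bot.2 h)
  · exact he.embedding (σ.toEmbedding.trans (Function.Embedding.subtype _))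
  · rw [← iSup_support, ← σ.iSup_comp]

lemma exists_nat_orthogonalIdempotents_iSup_span_eq {ι : Type*} [Countable ι] {f : ι → R}
    (hf : ∀ i, IsIdempotentElem (f i)) (hfg : ¬ (⨆ i, Ideal.span {f i}).FG) :
    ∃ e : ℕ → R, (∀ n, e n ≠ 0) ∧ OrthogonalIdempotents e ∧
      ⨆ n, Ideal.span {e n} = ⨆ i, Ideal.span {f i} := by
  rcases isEmpty_or_nonempty ι with _ | _
  · exact absurd (iSup_of_empty (fun i => Ideal.span {f i}) ▸ Submodule.fg_bot) hfg
  obtain ⟨σ, hσ⟩ := exists_surjective_nat ι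
  let g (n : ℕ) : {a : R // IsIdempotentElem a} := ⟨f (σ n), hf (σ n)⟩
  have iSup_disjointed_eq : ⨆ n, Ideal.span {(disjointed g n).1} = ⨆ i, Ideal.span {f i} :=
    (iSup_span_disjointed g).trans (hσ.iSup_comp fun i => Ideal.span {f i})
  rw [← iSup_disjointed_eq] at hfg ⊢
  exact exists_nat_orthogonalIdempotents_of_not_fg (orthogonalIdempotents_disjointed g) hfg

lemma exists_isIdempotentElem_span_singleton_eq {d : R} (hd : d ^ 2 ∣ d) :
    ∃ f : R, IsIdempotentElem f ∧ Ideal.span {f} = Ideal.span {d} := by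
  have span_idem : IsIdempotentElem (Ideal.span {d}) := by
    rw [IsIdempotentElem, Ideal.span_singleton_mul_span_singleton, ← sq]
    exact le_antisymm (Ideal.span_singleton_le_span_singleton.2 (dvd_pow_self d two_ne_zero))
      (Ideal.span_singleton_le_span_singleton.2 hd)
  obtain ⟨f, hf, hspan⟩ :=
    (Ideal.isIdempotentElem_iff_of_fg _ (Submodule.fg_span_singleton d)).1 span_idem
  exact ⟨f, hf, hspan.symm⟩

lemma isIdempotentElem_iSup_span {ι : Type*} {f : ι → R} (hf : ∀ i, IsIdempotentElem (f i)) :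
    IsIdempotentElem (⨆ i, Ideal.span {f i}) := by
  refine le_antisymm Ideal.mul_le_left (iSup_le fun i => ?_)
  have hfi : f i ∈ ⨆ i, Ideal.span {f i} :=
    Ideal.mem_iSup_of_mem i (Ideal.mem_span_singleton_self (f i))
  rw [Ideal.span_singleton_le_iff_mem, ← (hf i).eq]
  exact Ideal.mul_mem_mul hfi hfi

end OrthogonalIdempotents

section SeparableAlgebra

variable {R A : Type*} [CommRing R] [CommRing A] [Algebra R A]

lemma sq_sub_dvd_sub_of_separable {p : Polynomial R} (hp : p.Separable) {x y : A}
    (hx : Polynomial.aeval x p = 0) (hy : Polynomial.aeval y p = 0) : (x - y) ^ 2 ∣ x - y := by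
  obtain ⟨u, v, huv⟩ := hp
  obtain ⟨r, taylor⟩ := (p.map (algebraMap R A)).binomExpansion y (x - y)
  rw [add_sub_cancel, Polynomial.derivative_map] at taylor
  simp only [Polynomial.eval_map_algebraMap, hx, hy, zero_add] at taylor
  have derivative_unit : Polynomial.aeval y v * Polynomial.aeval y p.derivative = 1 := by
    simpa [hy] using congrArg (Polynomial.aeval y) huv
  refine ⟨-(Polynomial.aeval y v * r), ?_⟩
  linear_combination (-(x - y)) * derivative_unit - Polynomial.aeval y v * taylor

lemma span_image_one_tmul_sub_tmul_one {s : Set A} (hs : Algebra.adjoin R s = ⊤) :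
    Ideal.span ((fun a : A => (1 : A) ⊗ₜ[R] a - a ⊗ₜ[R] (1 : A)) '' s) =
      KaehlerDifferential.ideal R A := by
  rw [← KaehlerDifferential.span_range_eq_ideal]
  refine le_antisymm (Ideal.span_mono (Set.image_subset_range _ _)) ?_
  refine Ideal.span_le.2 (Set.range_subset_iff.2 fun a => ?_)
  rw [SetLike.mem_coe]
  have ha : a ∈ Algebra.adjoin R s := hs ▸ Algebra.mem_top
  induction ha using Algebra.adjoin_induction with
  | mem a ha => exact Ideal.subset_span ⟨a, ha, rfl⟩
  | algebraMap r => simp [Algebra.algebraMap_eq_smul_one, TensorProduct.smul_tmul]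
  | add a b _ _ ha hb =>
    rw [TensorProduct.tmul_add, TensorProduct.add_tmul, add_sub_add_comm]
    exact Ideal.add_mem _ ha hb
  | mul a b _ _ ha hb =>
    have leibniz : (1 : A) ⊗ₜ[R] (a * b) - (a * b) ⊗ₜ[R] (1 : A) =
        (1 ⊗ₜ a) * (1 ⊗ₜ b - b ⊗ₜ 1) + (b ⊗ₜ 1) * (1 ⊗ₜ a - a ⊗ₜ 1) := by
      simp [mul_sub, mul_comm]
    rw [leibniz]
    exact Ideal.add_mem _ (Ideal.mul_mem_left _ _ hb) (Ideal.mul_mem_left _ _ ha)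

/-- Coordinates of a tensor along its left factor: given coordinate functions `c` on `A`, this is
the map `A ⊗[R] A → (ι →₀ R) ⊗[R] A ≃ (ι →₀ A)` sending `x ⊗ₜ y` to `i ↦ c x i • y`. -/
noncomputable def leftCoordinates {ι : Type*} [DecidableEq ι] (c : A →ₗ[R] ι →₀ R) :
    A ⊗[R] A →ₗ[R] ι →₀ A :=
  (TensorProduct.finsuppScalarLeft R A ι).toLinearMap ∘ₗ c.rTensor A

section leftCoordinates

variable {ι : Type*} [DecidableEq ι] (c : A →ₗ[R] ι →₀ R)

lemma leftCoordinates_tmul_apply (x y : A) (i : ι) :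
    leftCoordinates c (x ⊗ₜ y) i = c x i • y := by
  simp [leftCoordinates]

lemma leftCoordinates_one_tmul_mul (a : A) (z : A ⊗[R] A) :
    leftCoordinates c ((1 ⊗ₜ a) * z) = a • leftCoordinates c z := by
  induction z with
  | zero => simp
  | tmul x y => ext i; simp [leftCoordinates_tmul_apply]
  | add z w hz hw => rw [mul_add, map_add, map_add, hz, hw, smul_add]

lemma lmul'_eq_sum_leftCoordinates {v : ι → A}
    (hc : Finsupp.linearCombination R v ∘ₗ c = LinearMap.id) (z : A ⊗[R] A) :
    Algebra.TensorProduct.lmul' R z = (leftCoordinates c z).sum fun i y => v i * y := by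
  induction z with
  | zero => simp
  | tmul x y =>
    have expand_x : (c x).sum (fun i r => r • v i) = x := by
      rw [← Finsupp.linearCombination_apply, ← LinearMap.comp_apply, hc, LinearMap.id_apply]
    have coordinates : leftCoordinates c (x ⊗ₜ y) =
        (c x).mapRange (fun r => r • y) (zero_smul R y) := by
      ext i
      rw [leftCoordinates_tmul_apply, Finsupp.mapRange_apply]
    calc Algebra.TensorProduct.lmul' R (x ⊗ₜ y) = (c x).sum (fun i r => r • v i) * y := by
          rw [expand_x, Algebra.TensorProduct.lmul'_apply_tmul]
      _ = (leftCoordinates c (x ⊗ₜ y)).sum fun i y => v i * y := by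
          rw [coordinates, Finsupp.sum_mapRange_index fun _ => mul_zero _, Finsupp.sum_mul]
          simp only [smul_mul_assoc, mul_smul_comm]
  | add z w hz hw =>
    rw [map_add, map_add, hz, hw]
    exact (Finsupp.sum_add_index' (fun _ => mul_zero _) fun _ _ _ => mul_add _ _ _).symm

end leftCoordinates

lemma finite_of_projective_of_separability_element [Module.Projective R A] {t : A ⊗[R] A}
    (ht : ∀ a : A, (1 ⊗ₜ a) * t = (a ⊗ₜ 1) * t)
    (ht_one : Algebra.TensorProduct.lmul' R t = 1) : Module.Finite R A := by
  classical
  obtain ⟨c, hc⟩ := Module.projective_def'.1 ‹Module.Projective R A›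
  obtain ⟨S, hS⟩ := TensorProduct.exists_finset t
  let generators := Finset.image₂ (fun i n => i * n) (leftCoordinates c t).support
    (S.image Prod.snd)
  have coordinate_mul (a i : A) :
      a * leftCoordinates c t i = ∑ p ∈ S, c (a * p.1) i • p.2 := by
    calc a * leftCoordinates c t i = leftCoordinates c ((a ⊗ₜ 1) * t) i := by
          rw [← ht, leftCoordinates_one_tmul_mul, Finsupp.smul_apply, smul_eq_mul]
      _ = ∑ p ∈ S, c (a * p.1) i • p.2 := by
          rw [hS, Finset.mul_sum, map_sum, Finsupp.finsetSum_apply]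
          simp only [Algebra.TensorProduct.tmul_mul_tmul, one_mul, leftCoordinates_tmul_apply]
  refine ⟨generators, eq_top_iff.2 fun a _ => ?_⟩
  have expansion :
      a = ∑ i ∈ (leftCoordinates c t).support, ∑ p ∈ S, c (a * p.1) i • (i * p.2) := by
    calc a = a * Algebra.TensorProduct.lmul' R t := by rw [ht_one, mul_one]
      _ = ∑ i ∈ (leftCoordinates c t).support, i * (a * leftCoordinates c t i) := by
          rw [lmul'_eq_sum_leftCoordinates c hc, Finsupp.sum, Finset.mul_sum]
          exact Finset.sum_congr rfl fun i _ => mul_left_comm _ _ _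
      _ = _ := by simp only [coordinate_mul, Finset.mul_sum, mul_smul_comm]
  rw [expansion]
  refine Submodule.sum_mem _ fun i hi => Submodule.sum_mem _ fun p hp => ?_
  exact Submodule.smul_mem _ _ (Submodule.subset_span
    (Finset.mem_image₂_of_mem hi (Finset.mem_image_of_mem _ hp)))

lemma finite_of_fg_kaehlerDifferential_ideal [Module.Projective R A]
    (hidem : IsIdempotentElem (KaehlerDifferential.ideal R A))
    (hfg : (KaehlerDifferential.ideal R A).FG) : Module.Finite R A := by
  obtain ⟨e, he, hspan⟩ := (Ideal.isIdempotentElem_iff_of_fg _ hfg).1 hidem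
  refine finite_of_projective_of_separability_element (t := 1 - e) (fun a => ?_) ?_
  · have : (1 : A) ⊗ₜ[R] a - a ⊗ₜ[R] (1 : A) ∈ Ideal.span {e} := by
      rw [← Ideal.submodule_span_eq, ← hspan]
      exact KaehlerDifferential.one_smul_sub_smul_one_mem_ideal R a
    obtain ⟨c, hc⟩ := Ideal.mem_span_singleton.1 this
    linear_combination (1 - e) * hc - c * he.eq
  · have : e ∈ KaehlerDifferential.ideal R A := hspan ▸ Ideal.mem_span_singleton_self e
    rw [map_sub, map_one, (RingHom.mem_ker).1 this, sub_zero]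

lemma exists_idempotents_iSup_span_eq_kaehlerDifferential_ideal [Algebra.IsSeparable R A]
    {s : Set A} (hs : Algebra.adjoin R s = ⊤) :
    ∃ f : s → A ⊗[R] A, (∀ a, IsIdempotentElem (f a)) ∧
      ⨆ a, Ideal.span {f a} = KaehlerDifferential.ideal R A := by
  have sq_dvd (a : A) : ((1 : A) ⊗ₜ[R] a - a ⊗ₜ[R] (1 : A)) ^ 2 ∣ 1 ⊗ₜ a - a ⊗ₜ 1 := by
    have aeval_map (φ : A →ₐ[R] A ⊗[R] A) : Polynomial.aeval (φ a) (minpoly R a) = 0 := by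
      rw [Polynomial.aeval_algHom_apply, minpoly.aeval, map_zero]
    exact sq_sub_dvd_sub_of_separable (Algebra.IsSeparable.isSeparable R a)
      (aeval_map Algebra.TensorProduct.includeRight) (aeval_map Algebra.TensorProduct.includeLeft)
  choose f hf hspan using fun a : s => exists_isIdempotentElem_span_singleton_eq (sq_dvd a)
  refine ⟨f, hf, ?_⟩
  simp only [hspan]
  rw [← span_image_one_tmul_sub_tmul_one hs, ← Ideal.span_iUnion, Set.image_eq_iUnion,
    Set.biUnion_eq_iUnion]

end SeparableAlgebra

lemma exists_countable_span_eq_top_of_rank_le_aleph0 {R M : Type*} [Ring R]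
    [StrongRankCondition R] [AddCommGroup M] [Module R M] [Module.Free R M]
    (h : Module.rank R M ≤ Cardinal.aleph0) :
    ∃ s : Set M, s.Countable ∧ Submodule.span R s = ⊤ := by
  let b := Module.Free.chooseBasis R M
  rw [← b.mk_eq_rank'', Cardinal.mk_le_aleph0_iff] at h
  exact ⟨Set.range b, Set.countable_range b, b.span_eq⟩

theorem stmt_14_general (R A : Type*) [CommRing R] [CommRing A] [Algebra R A]
    [Module.Projective R A] [Algebra.IsSeparable R A] {s : Set A} (hs : s.Countable)
    (hadjoin : Algebra.adjoin R s = ⊤) (hfin : ¬ Module.Finite R A) :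
    ∃ e : ℕ → A ⊗[R] A,
      (∀ i, e i ≠ 0) ∧
      (∀ i, IsIdempotentElem (e i)) ∧
      (∀ i j, i ≠ j → e i * e j = 0) ∧
      iSupIndep (fun i : ℕ => Ideal.span {e i}) ∧
      (⨆ i : ℕ, Ideal.span {e i}) =
        RingHom.ker (Algebra.TensorProduct.lmul' (S := A) R).toRingHom := by
  have : Countable s := hs
  obtain ⟨f, hf, hspan⟩ :=
    exists_idempotents_iSup_span_eq_kaehlerDifferential_ideal hadjoin
  have not_fg : ¬ (⨆ a, Ideal.span {f a}).FG := fun hfg =>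
    hfin (finite_of_fg_kaehlerDifferential_ideal (hspan ▸ isIdempotentElem_iSup_span hf)
      (hspan ▸ hfg))
  obtain ⟨e, he_ne, he, he_span⟩ := exists_nat_orthogonalIdempotents_iSup_span_eq hf not_fg
  exact ⟨e, he_ne, he.idem, fun i j hij => he.ortho hij,
    iSupIndep_span_singleton_of_orthogonalIdempotents he, he_span.trans hspan⟩

/-- Lemma 7.3(a): let `F` be a separable algebraic field extension of `k` of
countably infinite dimension, and let `J` be the kernel of the multiplication map
`μ : F ⊗[k] F → F`.  Then there is an infinite sequence of nonzero pairwise orthogonal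
idempotents `e i` in `F ⊗[k] F` such that `J` is the internal direct sum of the ideals
`e i · (F ⊗[k] F)`. -/
theorem stmt_14 (k F : Type u) [Field k] [Field F] [Algebra k F] [Algebra.IsSeparable k F]
    (hdim : Module.rank k F = Cardinal.aleph0) :
    ∃ e : ℕ → F ⊗[k] F,
      (∀ i, e i ≠ 0) ∧
      (∀ i, IsIdempotentElem (e i)) ∧
      (∀ i j, i ≠ j → e i * e j = 0) ∧
      iSupIndep (fun i : ℕ => Ideal.span {e i}) ∧
      (⨆ i : ℕ, Ideal.span {e i}) =
        RingHom.ker (Algebra.TensorProduct.lmul' (S := F) k).toRingHom := by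
  obtain ⟨s, hs, hspan⟩ := exists_countable_span_eq_top_of_rank_le_aleph0 hdim.le
  exact stmt_14_general k F hs (top_le_iff.1 (hspan.ge.trans (Algebra.span_le_adjoin k s)))
    fun _ => (Module.rank_lt_aleph0 k F).ne hdim
end

section
/- Let J be the kernel of the multiplication map μ: F ⊗_k F → F, viewed as an F^e-module, and view F as an F^e-module via μ. Then Hom_{F^e}(F, J) = 0 and Hom_{F^e}(J, F) = 0. -/
open CategoryTheory Limits TensorProduct

universe u

/-- `F` is a module over `F ⊗[k] F` via the multiplication map `μ : F ⊗[k] F → F`. -/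
noncomputable instance (priority := 50) mulModule (k F : Type u) [Field k] [Field F]
    [Algebra k F] : Module (F ⊗[k] F) F :=
  Module.compHom F (Algebra.TensorProduct.lmul' (S := F) k).toRingHom

/-!
For a functional `φ` on the right factor of `F ⊗[k] F`, let `c_φ : F ⊗[k] F → F` be the contraction
`a ⊗ b ↦ φ(b) a`. If `x` is annihilated by every `1 ⊗ a - a ⊗ 1`, then `a * c_φ(x) = c_{φ(a ·)}(x)`,
so all multiples of `c_φ(x)` lie in the finitely generated submodule containing every contraction
of `x`. Since `F` is infinite-dimensional, this forces `c_φ(x) = 0` for all `φ`, that is, `x = 0`.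
Hence `J` contains no nonzero element killed by `J`, while `J` kills `F`: so `Hom(F, J) = 0`.
In the other direction, `J / J²` is the module of Kähler differentials, which vanishes because `F`
is separable over `k`; so `J = J²`, and every map from `J` to a module killed by `J` is zero.
-/

theorem linearMap_eq_zero_of_ideal_smul_top_eq_top {S M N : Type*} [CommSemiring S]
    [AddCommMonoid M] [Module S M] [AddCommMonoid N] [Module S N] {I : Ideal S}
    (hN : I • (⊤ : Submodule S N) = ⊤) (hM : I ≤ Module.annihilator S M) (g : N →ₗ[S] M) :
    g = 0 := by
  have hker : I • (⊤ : Submodule S N) ≤ LinearMap.ker g := by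
    refine Submodule.smul_le.mpr fun r hr n _ => ?_
    rw [LinearMap.mem_ker, map_smul, Module.mem_annihilator.mp (hM hr)]
  exact LinearMap.ker_eq_top.mp (top_le_iff.mp (hN ▸ hker))

theorem module_finite_of_injective_of_free {R M N : Type*} [Semiring R] [StrongRankCondition R]
    [AddCommMonoid M] [Module R M] [Module.Free R M] [AddCommMonoid N] [Module R N]
    [Module.Finite R N] (f : M →ₗ[R] N) (hf : Function.Injective f) : Module.Finite R M := by
  let b := Module.Free.chooseBasis R M
  have := (b.linearIndependent.map_injOn f hf.injOn).finite
  exact .of_basis b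

section Contraction

variable {R A M N : Type*} [CommSemiring R] [Semiring A] [Algebra R A] [AddCommMonoid M]
  [Module R M] [Module A M] [IsScalarTower R A M] [AddCommMonoid N] [Module R N]

variable (A M) in
/-- The contraction `m ⊗ n ↦ φ n • m` of the right tensor factor by a functional `φ`, as a map
that is linear over any `R`-algebra `A` acting on the left factor. -/
noncomputable def dualContractRight (φ : Module.Dual R N) : M ⊗[R] N →ₗ[A] M :=
  (AlgebraTensorModule.rid R A M).toLinearMap ∘ₗ AlgebraTensorModule.lTensor A M φ

theorem dualContractRight_tmul (φ : Module.Dual R N) (m : M) (n : N) :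
    dualContractRight A M φ (m ⊗ₜ n) = φ n • m := rfl

theorem dualContractRight_lTensor {P : Type*} [AddCommMonoid P] [Module R P]
    (φ : Module.Dual R P) (g : N →ₗ[R] P) (x : M ⊗[R] N) :
    dualContractRight A M φ (g.lTensor M x) = dualContractRight A M (φ ∘ₗ g) x := by
  induction x with
  | zero => simp only [map_zero]
  | add x y hx hy => simp only [map_add, hx, hy]
  | tmul m n => simp only [LinearMap.lTensor_tmul, dualContractRight_tmul, LinearMap.comp_apply]

variable (A) in
theorem exists_fg_forall_dualContractRight_mem (x : M ⊗[R] N) :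
    ∃ W : Submodule R M, W.FG ∧ ∀ φ : Module.Dual R N, dualContractRight A M φ x ∈ W := by
  induction x with
  | zero => exact ⟨⊥, Submodule.fg_bot, fun φ => by simp only [map_zero, zero_mem]⟩
  | add x y hx hy =>
    obtain ⟨V, hV, hxV⟩ := hx
    obtain ⟨W, hW, hyW⟩ := hy
    refine ⟨V ⊔ W, hV.sup hW, fun φ => ?_⟩
    rw [map_add]
    exact Submodule.add_mem_sup (hxV φ) (hyW φ)
  | tmul m n =>
    refine ⟨R ∙ m, Submodule.fg_span_singleton m, fun φ => ?_⟩
    rw [dualContractRight_tmul]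
    exact Submodule.smul_mem _ _ (Submodule.mem_span_singleton_self m)

theorem eq_zero_of_forall_dualContractRight_eq_zero [Module.Free R N] {x : M ⊗[R] N}
    (hx : ∀ φ : Module.Dual R N, dualContractRight A M φ x = 0) : x = 0 := by
  let b := Module.Free.chooseBasis R N
  refine (TensorProduct.equivFinsuppOfBasisRight b).map_eq_zero_iff.mp (Finsupp.ext fun i => ?_)
  exact (TensorProduct.equivFinsuppOfBasisRight_apply b x i).trans (hx (b.coord i))

end Contraction

theorem tensorProduct_eq_zero_of_forall_smul_eq_lTensor_lsmul {R A M N : Type*}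
    [CommRing R] [Ring A] [IsDomain A] [Algebra R A] [Module.Free R A] (hA : ¬ Module.Finite R A)
    [AddCommGroup M] [Module R M] [Module A M] [IsScalarTower R A M] [Module.IsTorsionFree A M]
    [AddCommMonoid N] [Module R N] [Module A N] [IsScalarTower R A N] [Module.Free R N]
    {x : M ⊗[R] N} (hx : ∀ a : A, a • x = (Algebra.lsmul R R N a).lTensor M x) : x = 0 := by
  refine eq_zero_of_forall_dualContractRight_eq_zero (A := A) fun φ => ?_
  by_contra hne
  obtain ⟨W, hW, hxW⟩ := exists_fg_forall_dualContractRight_mem A x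
  have hmul (a : A) : a • dualContractRight A M φ x ∈ W := by
    rw [← map_smul, hx, dualContractRight_lTensor]
    exact hxW _
  have : Module.Finite R W := .of_fg hW
  have : Nontrivial R := (algebraMap R A).domain_nontrivial
  let toMultiple : A →ₗ[R] W :=
    ((LinearMap.toSpanSingleton A M (dualContractRight A M φ x)).restrictScalars R).codRestrict
      W hmul
  have htoMultiple : Function.Injective toMultiple := fun a b hab =>
    smul_left_injective A hne (congrArg Subtype.val hab)
  exact hA (module_finite_of_injective_of_free toMultiple htoMultiple)

theorem one_tmul_mul_eq_lTensor_lsmul {R A B : Type*} [CommSemiring R] [Semiring A] [Algebra R A]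
    [Semiring B] [Algebra R B] (b : B) (x : A ⊗[R] B) :
    (1 ⊗ₜ[R] b) * x = (Algebra.lsmul R R B b).lTensor A x := by
  induction x with
  | zero => simp only [mul_zero, map_zero]
  | add x y hx hy => simp only [mul_add, map_add, hx, hy]
  | tmul a c =>
    rw [Algebra.TensorProduct.tmul_mul_tmul, one_mul]
    rfl

theorem eq_zero_of_forall_mem_kaehlerDifferential_ideal_mul_eq_zero {R A : Type*} [CommRing R]
    [CommRing A] [IsDomain A] [Algebra R A] [Module.Free R A] (hA : ¬ Module.Finite R A)
    {x : A ⊗[R] A} (hx : ∀ y ∈ KaehlerDifferential.ideal R A, y * x = 0) : x = 0 := by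
  refine tensorProduct_eq_zero_of_forall_smul_eq_lTensor_lsmul hA fun a => ?_
  have hcomm : (1 ⊗ₜ[R] a) * x = (a ⊗ₜ[R] 1) * x := by
    rw [← sub_eq_zero, ← sub_mul]
    exact hx _ (KaehlerDifferential.one_smul_sub_smul_one_mem_ideal R a)
  rw [← one_tmul_mul_eq_lTensor_lsmul, hcomm, Algebra.smul_def]
  rfl

theorem kaehlerDifferential_ideal_smul_top_eq_top (R A : Type*) [CommRing R] [CommRing A]
    [Algebra R A] [Algebra.FormallyUnramified R A] :
    KaehlerDifferential.ideal R A •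
      (⊤ : Submodule (A ⊗[R] A) (KaehlerDifferential.ideal R A)) = ⊤ :=
  -- The quotient is by definition `Ω[A⁄R]`, as the cotangent module of an ideal `I` is `I ⧸ I • ⊤`.
  Submodule.Quotient.subsingleton_iff.mp (inferInstanceAs (Subsingleton (Ω[A⁄R])))

theorem kaehlerDifferential_ideal_le_annihilator_mulModule (k F : Type u) [Field k] [Field F]
    [Algebra k F] : KaehlerDifferential.ideal k F ≤ Module.annihilator (F ⊗[k] F) F := by
  refine fun x hx => Module.mem_annihilator.mpr fun c => ?_
  change Algebra.TensorProduct.lmul' (S := F) k x * c = 0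
  rw [RingHom.mem_ker.mp hx, zero_mul]

theorem stmt_15_general {R A M : Type*} [CommRing R] [CommRing A] [IsDomain A] [Algebra R A]
    [Module.Free R A] [Algebra.FormallyUnramified R A] (hA : ¬ Module.Finite R A)
    [AddCommMonoid M] [Module (A ⊗[R] A) M]
    (hM : KaehlerDifferential.ideal R A ≤ Module.annihilator (A ⊗[R] A) M) :
    (∀ f : M →ₗ[A ⊗[R] A] KaehlerDifferential.ideal R A, f = 0) ∧
      (∀ g : KaehlerDifferential.ideal R A →ₗ[A ⊗[R] A] M, g = 0) := by
  refine ⟨fun f => LinearMap.ext fun m => Subtype.ext ?_, fun g => ?_⟩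
  · refine eq_zero_of_forall_mem_kaehlerDifferential_ideal_mul_eq_zero hA fun y hy => ?_
    have hfm : y • f m = 0 := by
      rw [← map_smul, Module.mem_annihilator.mp (hM hy), map_zero]
    exact congrArg Subtype.val hfm
  · exact linearMap_eq_zero_of_ideal_smul_top_eq_top
      (kaehlerDifferential_ideal_smul_top_eq_top R A) hM g

/-- Lemma 7.3(b): let `F` be a separable algebraic field extension of `k` of
countably infinite dimension, let `F^e = F ⊗[k] F`, view `F` as an `F^e`-module via the
multiplication map `μ`, and let `J = ker μ`.  Then `Hom_{F^e}(F, J) = 0` and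
`Hom_{F^e}(J, F) = 0`. -/
theorem stmt_15 (k F : Type u) [Field k] [Field F] [Algebra k F] [Algebra.IsSeparable k F]
    (hdim : Module.rank k F = Cardinal.aleph0) :
    (∀ f : F →ₗ[F ⊗[k] F]
        ↥(RingHom.ker (Algebra.TensorProduct.lmul' (S := F) k).toRingHom), f = 0) ∧
      (∀ g : ↥(RingHom.ker (Algebra.TensorProduct.lmul' (S := F) k).toRingHom)
        →ₗ[F ⊗[k] F] F, g = 0) := by
  have hinfinite : ¬ Module.Finite k F := fun _ => (Module.rank_lt_aleph0 k F).ne hdim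
  have := Algebra.FormallyUnramified.of_isSeparable k F
  exact stmt_15_general hinfinite (kaehlerDifferential_ideal_le_annihilator_mulModule k F)
end

section
/- View F as an F^e-module via the multiplication map μ: F ⊗_k F → F. Then Ext^1_{F^e}(F, F) = 0 and Hom_{F^e}(F, F^e) = 0. -/
open CategoryTheory Limits TensorProduct

universe u

/-!
Let `I` be the kernel of `μ : F ⊗[k] F → F`, so that `0 → I → F ⊗[k] F → F → 0` is a projective
presentation of `F` and `Ext¹(F, F)` is a quotient of `Hom(I, F)`. Now `I / I² = Ω[F⁄k]` vanishes,
so `I = I²`; since `I` kills `F`, every linear map `I → F` is zero.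

A linear map `F → F ⊗[k] F` is determined by the image `z` of `1`, which satisfies
`(x ⊗ 1) z = (1 ⊗ x) z` for all `x`. If `z ≠ 0`, some linear form `φ` on the right factor has
`(id ⊗ φ) z ≠ 0`. All contractions of `z` lie in one finite-dimensional subspace of `F`. But by the
relation on `z`, every multiple `x * (id ⊗ φ) z` is again a contraction of `z`, so that this
subspace is all of `F`.
-/

section ExtOne

variable {C : Type*} [Category* C] [Abelian C]

lemma exists_kernel_ι_comp_eq {S : ShortComplex C} (hS : S.ShortExact) [Projective S.X₂]
    {P Y : C} [Projective P] (ε : P ⟶ S.X₃) [Epi ε] (hY : ∀ f : S.X₁ ⟶ Y, f = 0)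
    (g : kernel ε ⟶ Y) : ∃ h : P ⟶ Y, kernel.ι ε ≫ h = g := by
  have := hS.epi_g
  have := hS.mono_f
  let t : P ⟶ S.X₂ := Projective.factorThru ε S.g
  let s : S.X₂ ⟶ P := Projective.factorThru S.g ε
  have ht : t ≫ S.g = ε := Projective.factorThru_comp ε S.g
  have hs : s ≫ ε = S.g := Projective.factorThru_comp S.g ε
  obtain ⟨v, hv⟩ := hS.exact.lift' (kernel.ι ε ≫ t) (by simp [ht])
  let w : S.X₁ ⟶ kernel ε := kernel.lift ε (S.f ≫ s) (by simp [hs])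
  let q : P ⟶ kernel ε := kernel.lift ε (𝟙 P - t ≫ s) (by simp [hs, ht])
  -- On `kernel ε` the map `q` is the identity up to a map through `S.X₁`, which `g` kills by `hY`.
  have hq : kernel.ι ε ≫ q = 𝟙 _ - v ≫ w := by
    rw [← cancel_mono (kernel.ι ε)]
    simp [q, w, reassoc_of% hv]
  refine ⟨q ≫ g, ?_⟩
  rw [reassoc_of% hq, Preadditive.sub_comp, Category.id_comp, Category.assoc, hY (w ≫ g),
    comp_zero, sub_zero]

lemma exists_kernel_lift_comp_eq {S : ShortComplex C} (hS : S.Exact) {X Y : C} {ε : S.X₃ ⟶ X}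
    {w : S.g ≫ ε = 0} (hε : (ShortComplex.mk S.g ε w).Exact) {g : S.X₂ ⟶ Y} (hg : S.f ≫ g = 0) :
    ∃ g' : kernel ε ⟶ Y, kernel.lift ε S.g w ≫ g' = g := by
  have : Epi (kernel.lift ε S.g w) := hε.epi_kernelLift
  let T := ShortComplex.mk S.f (kernel.lift ε S.g w) (by simp [← cancel_mono (kernel.ι ε)])
  have hT : T.Exact :=
    (ShortComplex.exact_iff_of_epi_of_isIso_of_mono
      { τ₁ := 𝟙 _, τ₂ := 𝟙 _, τ₃ := kernel.ι ε : T ⟶ S }).2 hS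
  exact hT.desc' g hg

variable (R : Type*) [Ring R] [Linear R C] [EnoughProjectives C]

theorem isZero_Ext_one_of_shortExact {S : ShortComplex C} (hS : S.ShortExact)
    [Projective S.X₂] {Y : C} (hY : ∀ f : S.X₁ ⟶ Y, f = 0) :
    IsZero (((Ext R C 1).obj (Opposite.op S.X₃)).obj Y) := by
  let P := projectiveResolution S.X₃
  refine IsZero.of_iso ?_ (P.isoExt 1 Y)
  rw [← HomologicalComplex.exactAt_iff_isZero_homology,
    HomologicalComplex.exactAt_iff' _ 0 1 2 (by simp) (by simp),
    ShortComplex.moduleCat_exact_iff]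
  intro (g : P.complex.X 1 ⟶ Y) (hg : P.complex.d 2 1 ≫ g = 0)
  obtain ⟨g', hg'⟩ := exists_kernel_lift_comp_eq (P.exact_succ 0) P.exact₀ hg
  have : Projective (P.complex.X 0) := P.projective 0
  let ε : P.complex.X 0 ⟶ S.X₃ := P.π.f 0
  have : Epi ε := inferInstanceAs (Epi (P.π.f 0))
  obtain ⟨h, hh⟩ := exists_kernel_ι_comp_eq hS ε hY g'
  have h_factor : P.complex.d 1 0 ≫ h = g := by
    rw [← hg', ← hh]
    exact (kernel.lift_ι_assoc _ _ P.complex_d_comp_π_f_zero h).symm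
  exact ⟨h, h_factor⟩

end ExtOne

section Module

lemma kaehlerDifferentialIdeal_smul_top_eq_top (R S : Type*) [CommRing R] [CommRing S]
    [Algebra R S] [Algebra.FormallyUnramified R S] :
    KaehlerDifferential.ideal R S • (⊤ : Submodule (S ⊗[R] S) (KaehlerDifferential.ideal R S)) =
      ⊤ :=
  Submodule.Quotient.subsingleton_iff.1
    (Algebra.FormallyUnramified.subsingleton_kaehlerDifferential (R := R) (A := S))

lemma linearMap_eq_zero_of_smul_top_eq_top {R N M : Type*} [CommSemiring R]
    [AddCommMonoid N] [Module R N] [AddCommMonoid M] [Module R M] {I : Ideal R}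
    (hN : I • (⊤ : Submodule R N) = ⊤) (hM : I ≤ Module.annihilator R M)
    (f : N →ₗ[R] M) : f = 0 := by
  have h_map : (⊤ : Submodule R N).map f ≤ ⊥ := by
    rw [← hN, Submodule.map_smul'', Submodule.smul_le]
    exact fun r hr m _ => Module.mem_annihilator.1 (hM hr) m
  ext n
  exact h_map (Submodule.mem_map_of_mem Submodule.mem_top)

theorem isZero_Ext_one_of_ker_smul_top_eq_top (k : Type*) {R X Y : Type u} [Ring k]
    [CommRing R] [Linear k (ModuleCat.{u} R)] [AddCommGroup X] [Module R X]
    [AddCommGroup Y] [Module R Y] {p : R →ₗ[R] X} (hp : Function.Surjective p)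
    (hker : LinearMap.ker p • (⊤ : Submodule R (LinearMap.ker p)) = ⊤)
    (hY : LinearMap.ker p ≤ Module.annihilator R Y) :
    IsZero (((Ext k (ModuleCat.{u} R) 1).obj (Opposite.op (ModuleCat.of R X))).obj
      (ModuleCat.of R Y)) := by
  have : Projective p.shortComplexKer.X₂ := (IsProjective.iff_projective R).1 inferInstance
  exact isZero_Ext_one_of_shortExact k (LinearMap.shortExact_shortComplexKer hp) fun f =>
    ModuleCat.hom_ext (linearMap_eq_zero_of_smul_top_eq_top hker hY f.hom)

end Module

section Contraction

variable {R A N B : Type*} [CommSemiring R] [Semiring A] [Algebra R A] [AddCommMonoid N]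
  [Module R N] [Semiring B] [Algebra R B]

/-- Contraction of the right tensor factor of `A ⊗[R] N` against a linear form `φ` on `N`, that is,
`id ⊗ φ : A ⊗[R] N → A ⊗[R] R = A`, as a left `A`-linear map. -/
noncomputable def rightContraction (φ : Module.Dual R N) : A ⊗[R] N →ₗ[A] A :=
  (AlgebraTensorModule.rid R A A).toLinearMap ∘ₗ AlgebraTensorModule.lTensor A A φ

@[simp]
lemma rightContraction_tmul (φ : Module.Dual R N) (a : A) (n : N) :
    rightContraction φ (a ⊗ₜ[R] n) = φ n • a := rfl

lemma eq_zero_of_forall_rightContraction_eq_zero [Module.Free R N] {z : A ⊗[R] N}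
    (hz : ∀ φ : Module.Dual R N, rightContraction φ z = 0) : z = 0 := by
  classical
  let b := Module.Free.chooseBasis R N
  apply (equivFinsuppOfBasisRight b).injective
  ext i
  rw [equivFinsuppOfBasisRight_apply, map_zero]
  exact hz (b.coord i)

lemma exists_fg_forall_rightContraction_mem (z : A ⊗[R] N) :
    ∃ V : Submodule R A, V.FG ∧ ∀ φ : Module.Dual R N, rightContraction φ z ∈ V := by
  induction z with
  | zero => exact ⟨⊥, Submodule.fg_bot, fun φ => map_zero (rightContraction φ)⟩
  | tmul a n =>
    exact ⟨R ∙ a, Submodule.fg_span_singleton a,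
      fun φ => Submodule.smul_mem _ _ (Submodule.mem_span_singleton_self a)⟩
  | add z w hz hw =>
    obtain ⟨V, hV, hzV⟩ := hz
    obtain ⟨W, hW, hwW⟩ := hw
    refine ⟨V ⊔ W, hV.sup hW, fun φ => ?_⟩
    rw [map_add]
    exact Submodule.add_mem_sup (hzV φ) (hwW φ)

lemma rightContraction_one_tmul_mul (φ : Module.Dual R B) (b : B) (z : A ⊗[R] B) :
    rightContraction φ ((1 : A) ⊗ₜ[R] b * z) =
      rightContraction (φ ∘ₗ LinearMap.mulLeft R b) z := by
  induction z with
  | zero => simp only [mul_zero, map_zero]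
  | tmul a c => simp
  | add z w hz hw => simp only [mul_add, map_add, hz, hw]

lemma rightContraction_tmul_one_mul (φ : Module.Dual R B) (a : A) (z : A ⊗[R] B) :
    rightContraction φ (a ⊗ₜ[R] (1 : B) * z) = a * rightContraction φ z := by
  induction z with
  | zero => simp only [mul_zero, map_zero]
  | tmul a c => simp
  | add z w hz hw => simp only [mul_add, map_add, hz, hw]

theorem eq_zero_of_forall_tmul_one_mul_eq {D : Type*} [DivisionRing D] [Algebra R D]
    [Module.Free R D] (hD : ¬ Module.Finite R D) {z : D ⊗[R] D}
    (hz : ∀ x : D, x ⊗ₜ[R] (1 : D) * z = (1 : D) ⊗ₜ[R] x * z) : z = 0 := by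
  refine eq_zero_of_forall_rightContraction_eq_zero fun φ => ?_
  by_contra hφ
  obtain ⟨V, hV, hzV⟩ := exists_fg_forall_rightContraction_mem z
  have hV_top : V = ⊤ := by
    refine eq_top_iff.2 fun y _ => ?_
    have hy := hzV (φ ∘ₗ LinearMap.mulLeft R (y / rightContraction φ z))
    rwa [← rightContraction_one_tmul_mul, ← hz, rightContraction_tmul_one_mul,
      div_mul_cancel₀ y hφ] at hy
  exact hD ⟨hV_top ▸ hV⟩

end Contraction

section Enveloping

variable {k F : Type u} [Field k] [Field F] [Algebra k F]

lemma smul_eq_lmul'_mul (a : F ⊗[k] F) (x : F) :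
    a • x = Algebra.TensorProduct.lmul' (S := F) k a * x := rfl

variable (k F) in
/-- The multiplication `μ : F ⊗[k] F → F` as a map of `F ⊗[k] F`-modules, presenting the module `F`
as a quotient of the enveloping algebra. It is encoded as `a ↦ a • 1`, so that linearity is
automatic. -/
noncomputable def multiplicationMap : F ⊗[k] F →ₗ[F ⊗[k] F] F :=
  LinearMap.toSpanSingleton (F ⊗[k] F) F 1

lemma multiplicationMap_apply (a : F ⊗[k] F) :
    multiplicationMap k F a = Algebra.TensorProduct.lmul' (S := F) k a :=
  mul_one _

variable (k F)

lemma multiplicationMap_surjective : Function.Surjective (multiplicationMap k F) := fun x =>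
  ⟨x ⊗ₜ 1, by simp [multiplicationMap_apply]⟩

lemma ker_multiplicationMap :
    LinearMap.ker (multiplicationMap k F) = KaehlerDifferential.ideal k F := by
  ext a
  rw [LinearMap.mem_ker, multiplicationMap_apply, KaehlerDifferential.ideal, RingHom.mem_ker]

lemma ker_multiplicationMap_le_annihilator :
    LinearMap.ker (multiplicationMap k F) ≤ Module.annihilator (F ⊗[k] F) F := fun a ha =>
  Module.mem_annihilator.2 fun x => by
    rw [smul_eq_lmul'_mul, ← multiplicationMap_apply, LinearMap.mem_ker.1 ha, zero_mul]

theorem isZero_Ext_one_of_formallyUnramified [Algebra.FormallyUnramified k F] :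
    IsZero (((Ext k (ModuleCat.{u} (F ⊗[k] F)) 1).obj
      (Opposite.op (ModuleCat.of (F ⊗[k] F) F))).obj (ModuleCat.of (F ⊗[k] F) F)) := by
  refine isZero_Ext_one_of_ker_smul_top_eq_top k (multiplicationMap_surjective k F) ?_
    (ker_multiplicationMap_le_annihilator k F)
  rw [ker_multiplicationMap]
  exact kaehlerDifferentialIdeal_smul_top_eq_top k F

variable {k F}

theorem linearMap_tensorProduct_eq_zero_of_not_finite (hF : ¬ Module.Finite k F)
    (f : F →ₗ[F ⊗[k] F] (F ⊗[k] F)) : f = 0 := by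
  have h_left (x : F) : f x = x ⊗ₜ[k] (1 : F) * f 1 := by
    rw [← smul_eq_mul, ← map_smul, smul_eq_lmul'_mul]
    simp
  have h_right (x : F) : f x = (1 : F) ⊗ₜ[k] x * f 1 := by
    rw [← smul_eq_mul, ← map_smul, smul_eq_lmul'_mul]
    simp
  have h_one : f 1 = 0 :=
    eq_zero_of_forall_tmul_one_mul_eq hF fun x => (h_left x).symm.trans (h_right x)
  ext x
  rw [h_left, h_one, mul_zero, LinearMap.zero_apply]

end Enveloping

theorem stmt_16_general (k F : Type u) [Field k] [Field F] [Algebra k F]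
    [Algebra.FormallyUnramified k F] (hF : ¬ Module.Finite k F) :
    Subsingleton (((Ext k (ModuleCat.{u} (F ⊗[k] F)) 1).obj
        (Opposite.op (ModuleCat.of (F ⊗[k] F) F))).obj (ModuleCat.of (F ⊗[k] F) F)) ∧
      (∀ f : F →ₗ[F ⊗[k] F] (F ⊗[k] F), f = 0) :=
  ⟨ModuleCat.subsingleton_of_isZero (isZero_Ext_one_of_formallyUnramified k F),
    linearMap_tensorProduct_eq_zero_of_not_finite hF⟩

set_option synthInstance.maxHeartbeats 1000000 in
set_option maxHeartbeats 1000000 in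
/-- Lemma 7.3(c): let `F` be a separable algebraic field extension of `k` of
countably infinite dimension, and view `F` as an `F^e = F ⊗[k] F`-module via the multiplication
map.  Then `Ext¹_{F^e}(F, F) = 0` and `Hom_{F^e}(F, F^e) = 0`. -/
theorem stmt_16 (k F : Type u) [Field k] [Field F] [Algebra k F] [Algebra.IsSeparable k F]
    (hdim : Module.rank k F = Cardinal.aleph0) :
    Subsingleton (((Ext k (ModuleCat.{u} (F ⊗[k] F)) 1).obj
        (Opposite.op (ModuleCat.of (F ⊗[k] F) F))).obj (ModuleCat.of (F ⊗[k] F) F)) ∧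
      (∀ f : F →ₗ[F ⊗[k] F] (F ⊗[k] F), f = 0) :=
  have := Algebra.FormallyUnramified.of_isSeparable k F
  stmt_16_general k F fun _ => (Module.rank_lt_aleph0 k F).ne hdim
end

section
/- The algebra F^e = F ⊗_k F has left global dimension 1 and its injective dimension as a left module over itself is 1; that is, F is smooth and htr F = gldim(F^e) = 1. -/
open CategoryTheory Limits TensorProduct

universe u

/-!
`F ⊗[k] F` is reduced and integral over `F`, hence von Neumann regular. As it has countable
dimension over `F`, each of its ideals is generated by countably many orthogonal idempotents, so
is a direct sum of principal ideals generated by idempotents and in particular projective. Thus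
`F ⊗[k] F` is hereditary, and all projective and injective dimensions are at most `1`.

If either of the two dimensions were `0`, then `F ⊗[k] F` would be Noetherian: all cyclic modules
would be projective, respectively `F ⊗[k] F` would be self-injective. In the second case every
family of scalars on an infinite set of orthogonal idempotents would be realized by a single ring
element, which needs uncountable dimension, so ideals are generated by finitely many idempotents.
But if the kernel of `F ⊗[k] F → F` is finitely generated, it vanishes in `F ⊗[E] F` for a finitely
generated subextension `E`, and descent along `E → F` gives `E = F`, which is then finite over `k`.
-/

/-! ### Resolutions of length one -/

section
variable {C : Type*} [Category* C] [Abelian C]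

theorem quasiIso_toSingle₀Equiv_symm {K : ChainComplex C ℕ} {X : C} {p : K.X 0 ⟶ X} [Epi p]
    (w : K.d 1 0 ≫ p = 0) (h₀ : (ShortComplex.mk _ _ w).Exact) (h : ∀ n, K.ExactAt (n + 1)) :
    QuasiIso ((K.toSingle₀Equiv X).symm ⟨p, w⟩) where
  quasiIsoAt n := by
    cases n with
    | zero =>
      rw [ChainComplex.quasiIsoAt₀_iff,
        ShortComplex.quasiIso_iff_of_zeros' _ (K.shape 0 0 (by simp)) rfl rfl]
      refine (ShortComplex.exact_and_epi_g_iff_of_iso ?_).mpr ⟨h₀, inferInstanceAs (Epi p)⟩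
      exact ShortComplex.isoMk (Iso.refl _) (Iso.refl _) (Iso.refl _)
        ((Category.id_comp _).trans (Category.comp_id _).symm)
        ((Category.id_comp _).trans ((ChainComplex.toSingle₀Equiv_symm_apply_f_zero _ w).symm.trans
          (Category.comp_id _).symm))
    | succ n =>
      rw [quasiIsoAt_iff_exactAt' _ _ (ChainComplex.exactAt_succ_single_obj _ _)]
      exact h n

theorem exactAt_succ_double_down_of_mono {X₀ X₁ : C} (f : X₀ ⟶ X₁) [Mono f]
    (h : (ComplexShape.down ℕ).Rel 1 0) (n : ℕ) :
    (HomologicalComplex.double f h).ExactAt (n + 1) := by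
  cases n with
  | zero =>
    rw [HomologicalComplex.exactAt_iff' _ 2 1 0 (by simp) (by simp), ShortComplex.exact_iff_mono]
    · change Mono ((HomologicalComplex.double f h).d 1 0)
      rw [HomologicalComplex.double_d f h one_ne_zero]
      infer_instance
    · exact (HomologicalComplex.isZero_double_X f h 2 (by simp) (by simp)).eq_of_src _ _
  | succ n =>
    exact .of_isZero (HomologicalComplex.isZero_double_X f h _ (by simp) (by simp))

/-- The projective resolution `0 ⟶ S.X₁ ⟶ S.X₂` of `S.X₃` given by a short exact sequence `S`. -/
noncomputable def twoTermProjectiveResolution {S : ShortComplex C} (hS : S.ShortExact)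
    [Projective S.X₁] [Projective S.X₂] : ProjectiveResolution S.X₃ :=
  have hr : (ComplexShape.down ℕ).Rel 1 0 := by simp
  let K : ChainComplex C ℕ := HomologicalComplex.double S.f hr
  let e₀ : K.X 0 ≅ S.X₂ := HomologicalComplex.doubleXIso₁ S.f hr one_ne_zero
  let e₁ : K.X 1 ≅ S.X₁ := HomologicalComplex.doubleXIso₀ S.f hr
  have hd : K.d 1 0 = e₁.hom ≫ S.f ≫ e₀.inv := HomologicalComplex.double_d S.f hr one_ne_zero
  have := hS.mono_f
  have := hS.epi_g
  have w : K.d 1 0 ≫ e₀.hom ≫ S.g = 0 := by simp [hd]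
  { complex := K
    projective
      | 0 => .of_iso e₀.symm inferInstance
      | 1 => .of_iso e₁.symm inferInstance
      | n + 2 => (HomologicalComplex.isZero_double_X S.f hr _ (by simp) (by simp)).projective
    π := (K.toSingle₀Equiv S.X₃).symm ⟨e₀.hom ≫ S.g, w⟩
    quasiIso := by
      refine quasiIso_toSingle₀Equiv_symm w ?_ (exactAt_succ_double_down_of_mono S.f hr)
      exact ShortComplex.exact_of_iso (ShortComplex.isoMk e₁.symm e₀.symm (Iso.refl _)
        (by simp [hd]) (by simp)) hS.exact }

theorem isZero_twoTermProjectiveResolution_X {S : ShortComplex C} (hS : S.ShortExact)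
    [Projective S.X₁] [Projective S.X₂] {n : ℕ} (hn : 1 < n) :
    IsZero ((twoTermProjectiveResolution hS).complex.X n) :=
  HomologicalComplex.isZero_double_X S.f (by simp) n (by lia) (by lia)

theorem projective_of_isZero_projectiveResolution_X {X : C} (P : ProjectiveResolution X)
    (h : ∀ n, 0 < n → IsZero (P.complex.X n)) : Projective X := by
  have h₁ : P.complex.d 1 0 = 0 := (h 1 one_pos).eq_of_src _ _
  have : IsIso (Cofork.π P.cokernelCofork) :=
    isIso_colimit_cocone_parallelPair_of_eq h₁ P.isColimitCokernelCofork
  let e : P.complex.X 0 ≅ X := @asIso _ _ _ _ (Cofork.π P.cokernelCofork) this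
  exact .of_iso e (P.projective 0)

theorem quasiIso_fromSingle₀Equiv_symm {K : CochainComplex C ℕ} {X : C} {i : X ⟶ K.X 0} [Mono i]
    (w : i ≫ K.d 0 1 = 0) (h₀ : (ShortComplex.mk _ _ w).Exact) (h : ∀ n, K.ExactAt (n + 1)) :
    QuasiIso ((K.fromSingle₀Equiv X).symm ⟨i, w⟩) where
  quasiIsoAt n := by
    cases n with
    | zero =>
      rw [CochainComplex.quasiIsoAt₀_iff,
        ShortComplex.quasiIso_iff_of_zeros _ rfl rfl (K.shape 0 0 (by simp))]
      refine (ShortComplex.exact_and_mono_f_iff_of_iso ?_).mpr ⟨h₀, inferInstanceAs (Mono i)⟩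
      exact ShortComplex.isoMk (Iso.refl _) (Iso.refl _) (Iso.refl _)
        ((Category.id_comp _).trans
          ((CochainComplex.fromSingle₀Equiv_symm_apply_f_zero _ w).symm.trans
            (Category.comp_id _).symm))
        ((Category.id_comp _).trans (Category.comp_id _).symm)
    | succ n =>
      rw [quasiIsoAt_iff_exactAt _ _ (CochainComplex.exactAt_succ_single_obj _ _)]
      exact h n

theorem exactAt_succ_double_up_of_epi {X₀ X₁ : C} (f : X₀ ⟶ X₁) [Epi f]
    (h : (ComplexShape.up ℕ).Rel 0 1) (n : ℕ) :
    (HomologicalComplex.double f h).ExactAt (n + 1) := by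
  cases n with
  | zero =>
    rw [HomologicalComplex.exactAt_iff' _ 0 1 2 (by simp) (by simp), ShortComplex.exact_iff_epi]
    · change Epi ((HomologicalComplex.double f h).d 0 1)
      rw [HomologicalComplex.double_d f h zero_ne_one]
      infer_instance
    · exact (HomologicalComplex.isZero_double_X f h 2 (by simp) (by simp)).eq_of_tgt _ _
  | succ n =>
    exact .of_isZero (HomologicalComplex.isZero_double_X f h _ (by simp) (by simp))

/-- The injective resolution `S.X₂ ⟶ S.X₃ ⟶ 0` of `S.X₁` given by a short exact sequence `S`. -/
noncomputable def twoTermInjectiveResolution {S : ShortComplex C} (hS : S.ShortExact)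
    [Injective S.X₂] [Injective S.X₃] : InjectiveResolution S.X₁ :=
  have hr : (ComplexShape.up ℕ).Rel 0 1 := by simp
  let K : CochainComplex C ℕ := HomologicalComplex.double S.g hr
  let e₀ : K.X 0 ≅ S.X₂ := HomologicalComplex.doubleXIso₀ S.g hr
  let e₁ : K.X 1 ≅ S.X₃ := HomologicalComplex.doubleXIso₁ S.g hr zero_ne_one
  have hd : K.d 0 1 = e₀.hom ≫ S.g ≫ e₁.inv := HomologicalComplex.double_d S.g hr zero_ne_one
  have := hS.mono_f
  have := hS.epi_g
  have w : (S.f ≫ e₀.inv) ≫ K.d 0 1 = 0 := by simp [hd]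
  { cocomplex := K
    injective
      | 0 => .of_iso e₀.symm inferInstance
      | 1 => .of_iso e₁.symm inferInstance
      | n + 2 => (HomologicalComplex.isZero_double_X S.g hr _ (by simp) (by simp)).injective
    ι := (K.fromSingle₀Equiv S.X₁).symm ⟨S.f ≫ e₀.inv, w⟩
    quasiIso := by
      refine quasiIso_fromSingle₀Equiv_symm w ?_ (exactAt_succ_double_up_of_epi S.g hr)
      exact ShortComplex.exact_of_iso (ShortComplex.isoMk (S₁ := S) (Iso.refl _) e₀.symm e₁.symm
        (by simp) (by simp [hd])) hS.exact }

theorem isZero_twoTermInjectiveResolution_X {S : ShortComplex C} (hS : S.ShortExact)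
    [Injective S.X₂] [Injective S.X₃] {n : ℕ} (hn : 1 < n) :
    IsZero ((twoTermInjectiveResolution hS).cocomplex.X n) :=
  HomologicalComplex.isZero_double_X S.g (by simp) n (by lia) (by lia)

theorem injective_of_isZero_injectiveResolution_X {X : C} (I : InjectiveResolution X)
    (h : ∀ n, 0 < n → IsZero (I.cocomplex.X n)) : Injective X := by
  have h₁ : I.cocomplex.d 0 1 = 0 := (h 1 one_pos).eq_of_tgt _ _
  have : IsIso (I.ι.f 0) := isIso_limit_cone_parallelPair_of_eq h₁ I.isLimitKernelFork
  exact .of_iso (asIso (I.ι.f 0)).symm (I.injective 0)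

end

section
variable {R : Type u} [Ring R]

theorem projDim_le_one_of_shortExact {S : ShortComplex (ModuleCat.{u} R)} (hS : S.ShortExact)
    [Projective S.X₁] [Projective S.X₂] : S.X₃.projDim ≤ 1 :=
  sInf_le ⟨twoTermProjectiveResolution hS, fun _ hi =>
    isZero_twoTermProjectiveResolution_X hS (by exact_mod_cast hi)⟩

theorem injDim_le_one_of_shortExact {S : ShortComplex (ModuleCat.{u} R)} (hS : S.ShortExact)
    [Injective S.X₂] [Injective S.X₃] : S.X₁.injDim ≤ 1 :=
  sInf_le ⟨twoTermInjectiveResolution hS, fun _ hi =>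
    isZero_twoTermInjectiveResolution_X hS (by exact_mod_cast hi)⟩

theorem projective_of_projDim_lt_one {M : ModuleCat.{u} R} (h : M.projDim < 1) :
    Projective M := by
  obtain ⟨n, ⟨P, hP⟩, hn⟩ := sInf_lt_iff.mp h
  obtain rfl := Order.lt_one_iff.mp hn
  exact projective_of_isZero_projectiveResolution_X P fun i hi => hP i (by exact_mod_cast hi)

theorem injective_of_injDim_lt_one {M : ModuleCat.{u} R} (h : M.injDim < 1) : Injective M := by
  obtain ⟨n, ⟨I, hI⟩, hn⟩ := sInf_lt_iff.mp h
  obtain rfl := Order.lt_one_iff.mp hn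
  exact injective_of_isZero_injectiveResolution_X I fun i hi => hI i (by exact_mod_cast hi)

end

/-! ### Hereditary rings -/

/-- A ring is (left) hereditary if all its left ideals are projective. -/
def IsHereditaryRing (R : Type*) [Ring R] : Prop :=
  ∀ J : Ideal R, Module.Projective R J

theorem isNoetherianRing_of_forall_projective_quotient {R : Type*} [Ring R]
    (hR : ∀ J : Ideal R, Module.Projective R (R ⧸ J)) : IsNoetherianRing R := by
  rw [isNoetherianRing_iff_ideal_fg]
  intro J
  have := hR J
  have := Module.finitePresentation_of_projective R (R ⧸ J)
  rw [← J.ker_mkQ]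
  exact Module.FinitePresentation.fg_ker J.mkQ J.mkQ_surjective

namespace IsHereditaryRing

theorem baer_of_surjective {R Q Q' : Type*} [Ring R] [AddCommGroup Q] [Module R Q]
    [AddCommGroup Q'] [Module R Q'] (hR : IsHereditaryRing R) (hQ : Module.Baer R Q)
    (q : Q →ₗ[R] Q') (hq : Function.Surjective q) : Module.Baer R Q' := by
  intro J g
  have := hR J
  obtain ⟨g', hg'⟩ := Module.projective_lifting_property q g hq
  obtain ⟨h, hh⟩ := hQ J g'
  refine ⟨q ∘ₗ h, fun x hx => ?_⟩
  rw [LinearMap.comp_apply, hh x hx]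
  exact LinearMap.congr_fun hg' ⟨x, hx⟩

variable {R : Type u} [Ring R]

theorem injective_of_epi (hR : IsHereditaryRing R) {M N : ModuleCat.{u} R} (f : M ⟶ N) [Epi f]
    [Injective M] : Injective N := by
  have hM : Module.Injective R M := (Module.injective_iff_injective_object R M).mpr inferInstance
  have hN : Module.Baer R N := hR.baer_of_surjective (Module.Baer.of_injective hM) f.hom
    ((ModuleCat.epi_iff_surjective f).mp inferInstance)
  exact (Module.injective_iff_injective_object R N).mp hN.injective

theorem exists_injective_shortExact (hR : IsHereditaryRing R) (M : ModuleCat.{u} R) :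
    ∃ (Q Q' : ModuleCat.{u} R) (f : M ⟶ Q) (g : Q ⟶ Q') (w : f ≫ g = 0),
      Injective Q ∧ Injective Q' ∧ (ShortComplex.mk f g w).ShortExact :=
  ⟨_, _, Injective.ι M, cokernel.π _, cokernel.condition _, inferInstance,
    hR.injective_of_epi (cokernel.π (Injective.ι M)), { exact := ShortComplex.exact_cokernel _ }⟩

theorem injDim_le_one (hR : IsHereditaryRing R) (M : ModuleCat.{u} R) : M.injDim ≤ 1 := by
  obtain ⟨Q, Q', f, g, w, _, _, hS⟩ := hR.exists_injective_shortExact M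
  exact injDim_le_one_of_shortExact hS

theorem hasInjectiveDimensionLE_one (hR : IsHereditaryRing R) (M : ModuleCat.{u} R) :
    HasInjectiveDimensionLE M 1 := by
  obtain ⟨Q, Q', f, g, w, _, _, hS⟩ := hR.exists_injective_shortExact M
  exact hS.hasInjectiveDimensionLT_X₁ 1 inferInstance inferInstance

theorem hasProjectiveDimensionLE_one (hR : IsHereditaryRing R) (M : ModuleCat.{u} R) :
    HasProjectiveDimensionLE M 1 := by
  have := HasExt.standard (ModuleCat.{u} R)
  refine hasProjectiveDimensionLT_of_enoughInjectives M 2 fun N => ?_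
  have := hR.hasInjectiveDimensionLE_one N
  exact subsingleton_of_forall_eq 0 fun e => e.eq_zero_of_hasInjectiveDimensionLT 2 le_rfl

theorem projDim_le_one (hR : IsHereditaryRing R) (M : ModuleCat.{u} R) : M.projDim ≤ 1 := by
  let S := ShortComplex.mk (kernel.ι (Projective.π M)) (Projective.π M) (kernel.condition _)
  have hS : S.ShortExact := { exact := ShortComplex.exact_kernel _ }
  have : Projective S.X₂ := inferInstanceAs (Projective (Projective.over M))
  have : Projective S.X₁ := projective_iff_hasProjectiveDimensionLT_one.mpr
    ((hS.hasProjectiveDimensionLT_X₃_iff 0 inferInstance).mp (hR.hasProjectiveDimensionLE_one M))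
  exact projDim_le_one_of_shortExact hS

theorem globalDim_eq_one (hR : IsHereditaryRing R) (hN : ¬ IsNoetherianRing R) :
    Ring.globalDim R = 1 := by
  refine le_antisymm (iSup_le hR.projDim_le_one) ?_
  by_contra! h
  refine hN (isNoetherianRing_of_forall_projective_quotient fun J => ?_)
  exact (IsProjective.iff_projective _).mpr (projective_of_projDim_lt_one
    ((le_iSup ModuleCat.projDim (ModuleCat.of R (R ⧸ J))).trans_lt h))

end IsHereditaryRing

/-! ### Orthogonal idempotents -/

theorem aleph0_lt_rank_fun.{v, w} (K : Type v) (ι : Type w) [DivisionRing K] [Infinite ι] :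
    Cardinal.aleph0 < Module.rank K (ι → K) := by
  rw [rank_fun_infinite]
  calc Cardinal.aleph0 ≤ Cardinal.lift.{v} (Cardinal.mk ι) := by simp
    _ < 2 ^ Cardinal.lift.{v} (Cardinal.mk ι) := Cardinal.cantor _
    _ ≤ Cardinal.lift.{w} (Cardinal.mk K) ^ Cardinal.lift.{v} (Cardinal.mk ι) :=
      Cardinal.power_le_power_right (by simp [Cardinal.two_le_iff, exists_pair_ne])
    _ = Cardinal.mk (ι → K) := (Cardinal.mk_arrow ι K).symm

theorem orthogonalIdempotents_of_mul_prod_one_sub_eq_self {R : Type*} [CommRing R] {f : ℕ → R}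
    (hf : ∀ n, IsIdempotentElem (f n)) (h : ∀ n, f n * ∏ i ∈ Finset.range n, (1 - f i) = f n) :
    OrthogonalIdempotents f := by
  have hf_lt {m n} (hmn : m < n) : f m * f n = 0 := by
    obtain ⟨y, hy⟩ := Finset.dvd_prod_of_mem (fun i => 1 - f i) (Finset.mem_range.mpr hmn)
    rw [← h n, hy]
    linear_combination f n * y * (hf m).mul_one_sub_self
  refine ⟨hf, fun m n hmn => ?_⟩
  obtain hmn | hnm := hmn.lt_or_gt
  · exact hf_lt hmn
  · exact (mul_comm _ _).trans (hf_lt hnm)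

theorem one_sub_prod_one_sub_mem_span {R ι : Type*} [CommRing R] (f : ι → R) (s : Finset ι) :
    1 - ∏ i ∈ s, (1 - f i) ∈ Ideal.span (Set.range f) := by
  rw [← Ideal.Quotient.eq, map_one, map_prod]
  refine (Finset.prod_eq_one fun i _ => ?_).symm
  have hfi : f i ∈ Ideal.span (Set.range f) := Ideal.subset_span ⟨i, rfl⟩
  rw [map_sub, map_one, Ideal.Quotient.eq_zero_iff_mem.mpr hfi, sub_zero]

section
variable {R ι : Type*} [CommRing R] {f : ι → R}

theorem finite_mul_ne_zero_of_mem_span (hf : OrthogonalIdempotents f) {x : R}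
    (hx : x ∈ Ideal.span (Set.range f)) : {i | x * f i ≠ 0}.Finite := by
  induction hx using Submodule.span_induction with
  | mem x hx =>
    obtain ⟨j, rfl⟩ := hx
    exact (Set.finite_singleton j).subset fun i hi => by
      by_contra hij
      exact hi (hf.ortho (Ne.symm hij))
  | zero => simp
  | add x y _ _ hx hy =>
    refine (hx.union hy).subset fun i hi => ?_
    by_contra! h
    simp_all [add_mul]
  | smul r x _ hx =>
    refine hx.subset fun i hi h => hi ?_
    rw [smul_mul_assoc, h, smul_zero]

/-- The coordinates `(x * f i)ᵢ` of an element `x` of the ideal generated by orthogonal idempotents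
`f i`; they identify this ideal with the direct sum of the ideals `(f i)`. -/
noncomputable def orthogonalCoords (hf : OrthogonalIdempotents f) :
    Ideal.span (Set.range f) →ₗ[R] ι →₀ R where
  toFun x := .ofSupportFinite (fun i => x * f i) (finite_mul_ne_zero_of_mem_span hf x.2)
  map_add' x y := by ext i; exact add_mul (x : R) y (f i)
  map_smul' r x := by ext i; exact mul_assoc r (x : R) (f i)

theorem orthogonalCoords_idempotent (hf : OrthogonalIdempotents f) (i : ι) :
    orthogonalCoords hf ⟨f i, Ideal.subset_span ⟨i, rfl⟩⟩ = .single i (f i) := by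
  classical
  ext j
  rw [Finsupp.single_apply]
  exact hf.mul_eq i j

theorem projective_span_of_orthogonalIdempotents (hf : OrthogonalIdempotents f) :
    Module.Projective R (Ideal.span (Set.range f)) := by
  let e (i : ι) : Ideal.span (Set.range f) := ⟨f i, Ideal.subset_span ⟨i, rfl⟩⟩
  refine .of_split (orthogonalCoords hf) (Finsupp.linearCombination R e) ?_
  have he : Submodule.span R (Set.range e) = ⊤ := by
    apply Submodule.map_injective_of_injective (Ideal.span (Set.range f)).subtype_injective
    rw [Submodule.map_span, Submodule.map_subtype_top, ← Set.range_comp]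
    rfl
  refine LinearMap.ext_on_range he fun i => ?_
  rw [LinearMap.comp_apply, orthogonalCoords_idempotent, Finsupp.linearCombination_single]
  exact Subtype.ext (hf.idem i)

theorem exists_mul_eq_mul_of_baer (hf : OrthogonalIdempotents f) (hR : Module.Baer R R)
    (a : ι → R) : ∃ g, ∀ i, f i * g = f i * a i := by
  obtain ⟨φ, hφ⟩ := hR _ (Finsupp.linearCombination R a ∘ₗ orthogonalCoords hf)
  refine ⟨φ 1, fun i => ?_⟩
  rw [← smul_eq_mul, ← map_smul, smul_eq_mul, mul_one, hφ (f i) (Ideal.subset_span ⟨i, rfl⟩),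
    LinearMap.comp_apply, orthogonalCoords_idempotent, Finsupp.linearCombination_single,
    smul_eq_mul]

theorem aleph0_lt_rank_of_baer (K : Type*) [Field K] [Algebra K R] [Infinite ι]
    (hf : OrthogonalIdempotents f) (hf₀ : ∀ i, f i ≠ 0) (hR : Module.Baer R R) :
    Cardinal.aleph0 < Module.rank K R := by
  let Φ : R →ₗ[K] ι → R := LinearMap.pi fun i => LinearMap.mulLeft K (f i)
  let Ψ : (ι → K) →ₗ[K] ι → R :=
    LinearMap.pi fun i => LinearMap.toSpanSingleton K R (f i) ∘ₗ LinearMap.proj i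
  have hΨ : Function.Injective Ψ := fun a b hab => by
    ext i
    exact smul_left_injective K (hf₀ i) (congrFun hab i)
  have hΨΦ (a : ι → K) : Ψ a ∈ LinearMap.range Φ := by
    obtain ⟨g, hg⟩ := exists_mul_eq_mul_of_baer hf hR fun i => algebraMap K R (a i)
    refine ⟨g, funext fun i => (hg i).trans ?_⟩
    rw [mul_comm, ← Algebra.smul_def]
    rfl
  obtain ⟨s, hs⟩ := Module.projective_lifting_property Φ.rangeRestrict
    (Ψ.codRestrict (LinearMap.range Φ) hΨΦ) Φ.surjective_rangeRestrict
  have hsΦ (a : ι → K) : Φ (s a) = Ψ a := congrArg Subtype.val (LinearMap.congr_fun hs a)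
  have hs_inj : Function.Injective s := fun a b hab => hΨ (by rw [← hsΦ, hab, hsΦ])
  have hrank := LinearMap.lift_rank_le_of_injective s hs_inj
  exact Cardinal.aleph0_lt_lift.mp
    ((Cardinal.aleph0_lt_lift.mpr (aleph0_lt_rank_fun K ι)).trans_le hrank)
end

/-! ### Von Neumann regular rings of countable dimension -/

/-- A ring is von Neumann regular if every element `x` has a weak inverse `y`, that is
`x * y * x = x`. -/
def IsVonNeumannRegular (R : Type*) [Mul R] : Prop :=
  ∀ x : R, ∃ y, x * y * x = x

theorem isVonNeumannRegular_of_isReduced (A R : Type*) [CommRing A] [IsArtinianRing A]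
    [CommRing R] [Algebra A R] [Algebra.IsIntegral A R] [IsReduced R] :
    IsVonNeumannRegular R := by
  intro x
  let B := Algebra.adjoin A {x}
  have : Module.Finite A B :=
    Module.Finite.iff_fg.mpr (Algebra.IsIntegral.isIntegral x).fg_adjoin_singleton
  have : IsArtinianRing B := .of_finite A B
  obtain ⟨n, y, hy⟩ :=
    IsArtinian.exists_pow_succ_smul_dvd (⟨x, Algebra.self_mem_adjoin_singleton A x⟩ : B) (1 : B)
  have hxy : x ^ n * (x * (y : R) - 1) = 0 := by
    have := congrArg Subtype.val hy
    simp only [smul_eq_mul, MulMemClass.coe_mul, SubmonoidClass.coe_pow, OneMemClass.coe_one,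
      Nat.succ_eq_add_one, pow_succ] at this
    linear_combination this
  have hnil : (x * (x * (y : R) - 1)) ^ (n + 1) = 0 := by
    rw [mul_pow, pow_succ, pow_succ]
    linear_combination x * (x * (y : R) - 1) ^ n * hxy
  exact ⟨y, by linear_combination IsReduced.eq_zero _ ⟨_, hnil⟩⟩

theorem IsVonNeumannRegular.exists_isIdempotentElem_dvd_dvd {R : Type*} [CommRing R]
    (hR : IsVonNeumannRegular R) (x : R) : ∃ e, IsIdempotentElem e ∧ x ∣ e ∧ e ∣ x := by
  obtain ⟨y, hy⟩ := hR x
  refine ⟨x * y, ?_, ⟨y, rfl⟩, ⟨x, hy.symm⟩⟩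
  calc x * y * (x * y) = x * y * x * y := by ring
    _ = x * y := by rw [hy]

theorem IsVonNeumannRegular.exists_orthogonalIdempotents_span_eq {R : Type*} [CommRing R]
    (hR : IsVonNeumannRegular R) (x : ℕ → R) :
    ∃ f : ℕ → R, OrthogonalIdempotents f ∧
      Ideal.span (Set.range f) = Ideal.span (Set.range x) := by
  -- Gram–Schmidt: `f n` generates the part of `x n` orthogonal to `f 0, …, f (n - 1)`.
  choose e he hxe hex using hR.exists_isIdempotentElem_dvd_dvd
  let p : ℕ → R := fun n => n.rec 1 fun m q => q * (1 - e (x m * q))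
  let f : ℕ → R := fun n => e (x n * p n)
  have hp (n) : p n = ∏ i ∈ Finset.range n, (1 - f i) :=
    (Finset.prod_range_induction _ p rfl _ fun _ _ => rfl).symm
  have hp_idem (n) : IsIdempotentElem (p n) := by
    rw [hp, IsIdempotentElem, ← Finset.prod_mul_distrib]
    exact Finset.prod_congr rfl fun i _ => (he _).one_sub
  have hfp (n) : f n * p n = f n := by
    obtain ⟨y, hy⟩ := hxe (x n * p n)
    change f n = _ at hy
    linear_combination p n * hy - hy + x n * y * (hp_idem n).eq
  refine ⟨f, orthogonalIdempotents_of_mul_prod_one_sub_eq_self (fun n => he _)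
    fun n => hp n ▸ hfp n, le_antisymm ?_ ?_⟩
  · rw [Ideal.span_le, Set.range_subset_iff]
    exact fun n => Ideal.mem_of_dvd _ ((dvd_mul_right _ _).trans (hxe _))
      (Ideal.subset_span ⟨n, rfl⟩)
  · rw [Ideal.span_le, Set.range_subset_iff]
    intro n
    have hp_mem : 1 - p n ∈ Ideal.span (Set.range f) :=
      hp n ▸ one_sub_prod_one_sub_mem_span f _
    have hxp_mem : x n * p n ∈ Ideal.span (Set.range f) :=
      Ideal.mem_of_dvd _ (hex _) (Ideal.subset_span ⟨n, rfl⟩)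
    have hx_mem := add_mem (Ideal.mul_mem_left _ (x n) hp_mem) hxp_mem
    rwa [← mul_add, sub_add_cancel, mul_one] at hx_mem

theorem exists_span_range_eq_of_rank_le_aleph0 {K R : Type*} [Field K] [Ring R] [Algebra K R]
    (hK : Module.rank K R ≤ Cardinal.aleph0) (J : Ideal R) :
    ∃ x : ℕ → R, Ideal.span (Set.range x) = J := by
  let b := Module.Free.chooseBasis K (J.restrictScalars K)
  have hι : Countable (Module.Free.ChooseBasisIndex K (J.restrictScalars K)) := by
    rw [← Cardinal.mk_le_aleph0_iff, b.mk_eq_rank'']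
    exact (Submodule.rank_le _).trans hK
  have hspan : Submodule.span K (Set.range fun i => (b i : R)) = J.restrictScalars K := by
    have hrange : Set.range (fun i => (b i : R)) = (J.restrictScalars K).subtype '' Set.range b :=
      Set.range_comp _ _
    rw [hrange, ← Submodule.map_span, b.span_eq, Submodule.map_subtype_top]
  obtain ⟨x, hx⟩ := ((Set.countable_range fun i => (b i : R)).insert 0).exists_eq_range
    (Set.insert_nonempty _ _)
  refine ⟨x, ?_⟩
  rw [← hx, Ideal.span, Submodule.span_insert_zero, ← Submodule.span_span_of_tower K R, hspan]
  exact Submodule.span_eq J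

section
variable {K R : Type*} [Field K] [CommRing R] [Algebra K R]

theorem IsVonNeumannRegular.isHereditaryRing_of_rank_le_aleph0 (hR : IsVonNeumannRegular R)
    (hK : Module.rank K R ≤ Cardinal.aleph0) : IsHereditaryRing R := by
  intro J
  obtain ⟨x, rfl⟩ := exists_span_range_eq_of_rank_le_aleph0 hK J
  obtain ⟨f, hf, hfx⟩ := hR.exists_orthogonalIdempotents_span_eq x
  exact hfx ▸ projective_span_of_orthogonalIdempotents hf

theorem IsVonNeumannRegular.isNoetherianRing_of_baer (hR : IsVonNeumannRegular R)
    (hK : Module.rank K R ≤ Cardinal.aleph0) (hBaer : Module.Baer R R) : IsNoetherianRing R := by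
  rw [isNoetherianRing_iff_ideal_fg]
  intro J
  obtain ⟨x, rfl⟩ := exists_span_range_eq_of_rank_le_aleph0 hK J
  obtain ⟨f, hf, hfx⟩ := hR.exists_orthogonalIdempotents_span_eq x
  have hfin : {n | f n ≠ 0}.Finite := by
    by_contra hinf
    have : Infinite {n // f n ≠ 0} := Set.infinite_coe_iff.mpr hinf
    exact hK.not_gt (aleph0_lt_rank_of_baer K (hf.embedding (.subtype (f · ≠ 0)))
      (fun n => n.2) hBaer)
  rw [← hfx, Ideal.span, ← Submodule.span_sdiff_singleton_zero]
  refine Submodule.fg_span ((hfin.image f).subset ?_)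
  rintro _ ⟨⟨n, rfl⟩, hn⟩
  exact ⟨n, hn, rfl⟩
end

theorem IsVonNeumannRegular.selfInjDim_eq_one {K : Type*} {R : Type u} [Field K] [CommRing R]
    [Algebra K R] (hR : IsVonNeumannRegular R) (hK : Module.rank K R ≤ Cardinal.aleph0)
    (hN : ¬ IsNoetherianRing R) : Ring.selfInjDim R = 1 := by
  refine le_antisymm ((hR.isHereditaryRing_of_rank_le_aleph0 hK).injDim_le_one _) ?_
  by_contra! h
  have hInj : Module.Injective R R :=
    (Module.injective_iff_injective_object R R).mpr (injective_of_injDim_lt_one h)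
  exact hN (hR.isNoetherianRing_of_baer hK (.of_injective hInj))

/-! ### Tensor products of fields -/

theorem essFiniteType_of_fg_kaehlerDifferential_ideal (k F : Type*) [Field k] [Field F]
    [Algebra k F] (h : (KaehlerDifferential.ideal k F).FG) : Algebra.EssFiniteType k F := by
  classical
  rw [← KaehlerDifferential.span_range_eq_ideal, ← Set.image_univ] at h
  obtain ⟨t, ht, hspan⟩ := (Submodule.fg_span_iff_fg_span_finset_subset _).mp h
  obtain ⟨s, -, rfl⟩ := Finset.subset_set_image_iff.mp ht
  let E := IntermediateField.adjoin k (s : Set F)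
  obtain ⟨π, hπ_tmul⟩ : ∃ π : F ⊗[k] F →ₐ[k] F ⊗[E] F, ∀ a b, π (a ⊗ₜ b) = a ⊗ₜ b :=
    ⟨Algebra.TensorProduct.mapOfCompatibleSMul E k k F F, fun _ _ => rfl⟩
  have hπ : KaehlerDifferential.ideal k F ≤ RingHom.ker π := by
    rw [← KaehlerDifferential.span_range_eq_ideal, ← Set.image_univ, Ideal.span, hspan,
      Submodule.span_le, Finset.coe_image]
    rintro _ ⟨a, ha, rfl⟩
    have haE : a ∈ E := IntermediateField.subset_adjoin k (s : Set F) ha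
    rw [SetLike.mem_coe, RingHom.mem_ker, map_sub, sub_eq_zero, hπ_tmul, hπ_tmul]
    exact (Algebra.TensorProduct.tmul_one_eq_one_tmul (⟨a, haE⟩ : E)).symm
  have hE (x : F) : x ∈ E := by
    have hx : (1 : F) ⊗ₜ[E] x = x ⊗ₜ[E] 1 := by
      have := hπ (KaehlerDifferential.one_smul_sub_smul_one_mem_ideal k x)
      rwa [RingHom.mem_ker, map_sub, sub_eq_zero, hπ_tmul, hπ_tmul] at this
    obtain ⟨y, hy⟩ := (Algebra.IsEffective.of_faithfullyFlat E F x).mp (sub_eq_zero.mpr hx.symm)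
    exact hy ▸ y.2
  exact IntermediateField.fg_top_iff.mp ⟨s, top_unique fun x _ => hE x⟩

theorem isReduced_tensorProduct (k K F : Type*) [Field k] [Field K] [Field F] [Algebra k K]
    [Algebra k F] [Algebra.IsSeparable k F] : IsReduced (K ⊗[k] F) := by
  refine IsReduced.tensorProduct_of_flat_of_forall_fg fun B hB => ?_
  let E : IntermediateField k F := B.toIntermediateField' (Subalgebra.isField_of_algebraic B)
  have : Algebra.FiniteType k E := B.fg_iff_finiteType.mp hB
  have := Algebra.FormallyUnramified.of_isSeparable k E
  exact Algebra.FormallyUnramified.isReduced_of_field K (K ⊗[k] E)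

theorem finite_of_isNoetherianRing_tensorProduct (k F : Type*) [Field k] [Field F] [Algebra k F]
    [Algebra.IsAlgebraic k F] [IsNoetherianRing (F ⊗[k] F)] : Module.Finite k F := by
  have := essFiniteType_of_fg_kaehlerDifferential_ideal k F (IsNoetherian.noetherian _)
  exact Algebra.finite_of_essFiniteType_of_isAlgebraic

/-- Proposition 7.1(a): let `F` be a separable algebraic field extension of `k`
of countably infinite dimension.  Then `F` is smooth (the projective dimension of `F` as an
`F^e = F ⊗[k] F`-module is finite), the left global dimension of `F^e` is `1`, and
`htr F = injdim F^e = 1`. -/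
theorem stmt_18 (k F : Type u) [Field k] [Field F] [Algebra k F] [Algebra.IsSeparable k F]
    (hdim : Module.rank k F = Cardinal.aleph0) :
    ModuleCat.projDim (ModuleCat.of (F ⊗[k] F) F) ≠ ⊤ ∧
      Ring.globalDim (F ⊗[k] F) = 1 ∧
      Ring.selfInjDim (F ⊗[k] F) = 1 := by
  have := isReduced_tensorProduct k F F
  have hVNR : IsVonNeumannRegular (F ⊗[k] F) := isVonNeumannRegular_of_isReduced F _
  have hrank : Module.rank F (F ⊗[k] F) ≤ Cardinal.aleph0 := by
    rw [Module.rank_baseChange, hdim, Cardinal.lift_aleph0]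
  have hHer : IsHereditaryRing (F ⊗[k] F) := hVNR.isHereditaryRing_of_rank_le_aleph0 hrank
  have hN : ¬ IsNoetherianRing (F ⊗[k] F) := fun _ =>
    have := finite_of_isNoetherianRing_tensorProduct k F
    (Module.rank_lt_aleph0 k F).ne hdim
  exact ⟨ne_top_of_le_ne_top ENat.one_ne_top (hHer.projDim_le_one _),
    hHer.globalDim_eq_one hN, hVNR.selfInjDim_eq_one hrank hN⟩
end

section
/- Let U be a division k-algebra such that F ⊗_k U is a (left) noetherian ring. Then F ⊗_k U is a semisimple artinian ring; in particular its injective dimension over itself and its global dimension are 0. -/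
open CategoryTheory Limits TensorProduct

universe u

/-! A ring `S` in which every finite set lies in a semisimple subring has all its finitely generated
left ideals generated by idempotents, since this already holds inside the subring; if `S` is also
left noetherian, it is semisimple. Finite subsets of `F ⊗ U` come from some `C ⊗ U` with `C ⊆ F` a
finitely generated subalgebra. Separability of `F` makes `C` unramified, so `C ⊗ C` contains a
separability idempotent, and averaging a `U`-linear projection over it makes it `C ⊗ U`-linear, as
in Maschke's theorem. -/

universe v w

section HomologicalDimension

variable {R : Type u} [Ring R]

theorem injDim_eq_zero_of_injective (M : ModuleCat.{u} R) [Injective M] : M.injDim = 0 := by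
  refine nonpos_iff_eq_zero.mp (sInf_le ⟨InjectiveResolution.self M, fun i hi => ?_⟩)
  exact HomologicalComplex.isZero_single_obj_X _ _ _ _ (Nat.cast_pos.mp hi).ne'

theorem projDim_eq_zero_of_projective (M : ModuleCat.{u} R) [Projective M] : M.projDim = 0 := by
  refine nonpos_iff_eq_zero.mp (sInf_le ⟨ProjectiveResolution.self M, fun i hi => ?_⟩)
  exact HomologicalComplex.isZero_single_obj_X _ _ _ _ (Nat.cast_pos.mp hi).ne'

variable (R)

theorem selfInjDim_eq_zero_of_isSemisimpleRing [IsSemisimpleRing R] : Ring.selfInjDim R = 0 := by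
  have := Module.injective_of_isSemisimpleRing R R
  have : Injective (ModuleCat.of R R) := Module.injective_object_of_injective_module R R
  exact injDim_eq_zero_of_injective _

theorem globalDim_eq_zero_of_isSemisimpleRing [IsSemisimpleRing R] : Ring.globalDim R = 0 := by
  refine iSup_eq_bot.mpr fun M => ?_
  have := Module.projective_of_isSemisimpleRing R M
  exact projDim_eq_zero_of_projective M

end HomologicalDimension

section LocallySemisimple

variable {S : Type*} [Ring S]

theorem exists_isCompl_span_singleton_of_isIdempotentElem {e : S} (he : IsIdempotentElem e) :
    ∃ J : Ideal S, IsCompl (Ideal.span {e}) J := by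
  let mulRight := LinearMap.toSpanSingleton S S e
  have idem : IsIdempotentElem mulRight := LinearMap.ext_ring (by simp [mulRight, he.eq])
  rw [← Ideal.submodule_span_eq, ← LinearMap.range_toSpanSingleton]
  exact ⟨_, LinearMap.IsIdempotentElem.isCompl idem⟩

theorem exists_isIdempotentElem_span_eq_of_subset_semisimple_subring {s : Set S} (T : Subring S)
    [IsSemisimpleRing T] (hs : s ⊆ T) :
    ∃ e : S, IsIdempotentElem e ∧ Ideal.span s = Ideal.span {e} := by
  obtain ⟨e, he, hspan⟩ :=
    IsSemisimpleRing.ideal_eq_span_idempotent (Ideal.span (T.subtype ⁻¹' s))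
  refine ⟨e, he.map T.subtype, ?_⟩
  have himage : T.subtype '' (T.subtype ⁻¹' s) = s :=
    Set.image_preimage_eq_of_subset (by simpa using hs)
  simpa only [Ideal.map_span, himage, Set.image_singleton, Subring.subtype_apply]
    using congrArg (Ideal.map T.subtype) hspan

theorem isSemisimpleRing_of_forall_finite_subset_semisimple_subring [IsNoetherianRing S]
    (h : ∀ s : Set S, s.Finite → ∃ T : Subring S, IsSemisimpleRing T ∧ s ⊆ T) :
    IsSemisimpleRing S := by
  refine (isSemisimpleModule_iff S S).mpr ⟨fun I => ?_⟩
  obtain ⟨s, rfl⟩ := IsNoetherian.noetherian I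
  obtain ⟨T, _, hsT⟩ := h s s.finite_toSet
  obtain ⟨e, he, hspan⟩ := exists_isIdempotentElem_span_eq_of_subset_semisimple_subring T hsT
  rw [Ideal.submodule_span_eq, hspan]
  exact exists_isCompl_span_singleton_of_isIdempotentElem he

end LocallySemisimple

section Separable

variable {R A : Type*} [CommRing R] [CommRing A] [Algebra R A]

theorem isUnit_aeval_derivative_of_separable {f : Polynomial R} (hf : f.Separable) {x : A}
    (hx : Polynomial.aeval x f = 0) : IsUnit (Polynomial.aeval x f.derivative) := by
  have hcoprime := IsCoprime.map hf (Polynomial.aeval x).toRingHom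
  rwa [AlgHom.toRingHom_eq_coe, RingHom.coe_coe, hx, isCoprime_zero_left] at hcoprime

theorem formallyUnramified_of_isSeparable [Algebra.IsSeparable R A] :
    Algebra.FormallyUnramified R A := by
  have D_eq_zero (x : A) : KaehlerDifferential.D R A x = 0 := by
    have hunit := isUnit_aeval_derivative_of_separable
      (Algebra.IsSeparable.isSeparable R x) (minpoly.aeval R x)
    rw [← hunit.smul_eq_zero, ← Derivation.map_aeval, minpoly.aeval, map_zero]
  rw [Algebra.formallyUnramified_iff, ← Submodule.subsingleton_iff A, ← subsingleton_iff_bot_eq_top,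
    ← KaehlerDifferential.span_range_derivation, eq_comm, Submodule.span_eq_bot]
  rintro _ ⟨x, rfl⟩
  exact D_eq_zero x

theorem isSeparable_subalgebra [Algebra.IsSeparable R A] (C : Subalgebra R A) :
    Algebra.IsSeparable R C :=
  ⟨fun x => (isSeparable_map_iff C.val Subtype.val_injective).mp
    (Algebra.IsSeparable.isSeparable R (x : A))⟩

end Separable

section Averaging

variable {R A U M N : Type*} [CommRing R] [CommRing A] [Algebra R A] [Ring U] [Algebra R U]
  [AddCommGroup M] [Module R M] [Module A M] [Module U M]
  [AddCommGroup N] [Module R N] [Module A N] [Module U N]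
  [IsScalarTower R A M] [IsScalarTower R U M] [SMulCommClass A U M]
  [IsScalarTower R A N] [IsScalarTower R U N] [SMulCommClass A U N]

/-- The `U`-linear maps `m ↦ ∑ xᵢ • p (yᵢ • m)` obtained from a `U`-linear map `p`, as a function of
`∑ xᵢ ⊗ yᵢ : A ⊗[R] A`. -/
noncomputable def sandwich (p : M →ₗ[U] N) : A ⊗[R] A →ₗ[R] M →ₗ[U] N :=
  TensorProduct.lift <| LinearMap.mk₂ R
    (fun x y => Algebra.lsmul R U N x ∘ₗ p ∘ₗ Algebra.lsmul R U M y)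
    (fun _ _ _ => by ext; simp)
    (fun _ _ _ => by ext; simp)
    (fun _ _ _ => by ext; simp)
    (fun _ _ _ => by ext; simp [smul_algebra_smul_comm])

theorem sandwich_tmul_apply (p : M →ₗ[U] N) (x y : A) (m : M) :
    sandwich p (x ⊗ₜ[R] y) m = x • p (y • m) := rfl

theorem sandwich_one_tmul_mul_apply (p : M →ₗ[U] N) (a : A) (t : A ⊗[R] A) (m : M) :
    sandwich p ((1 ⊗ₜ a) * t) m = sandwich p t (a • m) := by
  induction t with
  | zero => simp
  | add s t hs ht => simp only [mul_add, map_add, LinearMap.add_apply, hs, ht]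
  | tmul x y =>
    rw [Algebra.TensorProduct.tmul_mul_tmul, one_mul, mul_comm a y, sandwich_tmul_apply,
      sandwich_tmul_apply, mul_smul]

theorem sandwich_tmul_one_mul_apply (p : M →ₗ[U] N) (a : A) (t : A ⊗[R] A) (m : M) :
    sandwich p ((a ⊗ₜ 1) * t) m = a • sandwich p t m := by
  induction t with
  | zero => simp
  | add s t hs ht => simp only [mul_add, map_add, LinearMap.add_apply, smul_add, hs, ht]
  | tmul x y =>
    rw [Algebra.TensorProduct.tmul_mul_tmul, one_mul, sandwich_tmul_apply, sandwich_tmul_apply,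
      mul_smul]

theorem sandwich_apply_of_forall_smul {p : M →ₗ[U] N} {m : M} {n : N}
    (h : ∀ a : A, p (a • m) = a • n) (t : A ⊗[R] A) :
    sandwich p t m = Algebra.TensorProduct.lmul' R t • n := by
  induction t with
  | zero => simp
  | add s t hs ht => simp only [map_add, LinearMap.add_apply, add_smul, hs, ht]
  | tmul x y =>
    rw [sandwich_tmul_apply, h, Algebra.TensorProduct.lmul'_apply_tmul, mul_smul]

theorem sandwich_elem_smul [Algebra.FormallyUnramified R A] [Algebra.EssFiniteType R A]
    (p : M →ₗ[U] N) (a : A) (m : M) :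
    sandwich p (Algebra.FormallyUnramified.elem R A) (a • m) =
      a • sandwich p (Algebra.FormallyUnramified.elem R A) m := by
  rw [← sandwich_one_tmul_mul_apply, Algebra.FormallyUnramified.one_tmul_mul_elem,
    sandwich_tmul_one_mul_apply]

end Averaging

section TensorProduct

attribute [local instance] Algebra.TensorProduct.rightAlgebra

variable {R A U M N : Type*} [CommRing R] [CommRing A] [Algebra R A] [Ring U] [Algebra R U]
  [AddCommGroup M] [Module A M] [Module U M] [Module (U ⊗[R] A) M]
  [IsScalarTower A (U ⊗[R] A) M] [IsScalarTower U (U ⊗[R] A) M]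

theorem tmul_smul_eq_smul_smul (u : U) (a : A) (m : M) : (u ⊗ₜ[R] a) • m = u • a • m := by
  have htmul : u ⊗ₜ[R] a = u • algebraMap A (U ⊗[R] A) a := by
    rw [Algebra.TensorProduct.right_algebraMap_apply, TensorProduct.smul_tmul', smul_eq_mul,
      mul_one]
  rw [htmul, smul_assoc, algebraMap_smul]

theorem smulCommClass_of_isScalarTower_tensorProduct (R A U M : Type*) [CommRing R] [CommRing A]
    [Algebra R A] [Ring U] [Algebra R U] [AddCommGroup M] [Module A M] [Module U M]
    [Module (U ⊗[R] A) M] [IsScalarTower A (U ⊗[R] A) M] [IsScalarTower U (U ⊗[R] A) M] :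
    SMulCommClass A U M where
  smul_comm a u m := by
    rw [← smul_one_smul (U ⊗[R] A) u m, ← smul_one_smul (U ⊗[R] A) u (a • m),
      smul_algebra_smul_comm]

variable [AddCommGroup N] [Module A N] [Module U N] [Module (U ⊗[R] A) N]
  [IsScalarTower A (U ⊗[R] A) N] [IsScalarTower U (U ⊗[R] A) N]

theorem map_tensorProduct_smul (f : M →ₗ[U] N) (hf : ∀ (a : A) (m : M), f (a • m) = a • f m)
    (s : U ⊗[R] A) (m : M) : f (s • m) = s • f m := by
  induction s with
  | zero => simp
  | add s t hs ht => simp only [add_smul, map_add, hs, ht]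
  | tmul u a => simp only [tmul_smul_eq_smul_smul, map_smul, hf]

theorem isSemisimpleModule_tensorProduct_of_formallyUnramified [Algebra.FormallyUnramified R A]
    [Algebra.EssFiniteType R A] [Module R M] [IsScalarTower R (U ⊗[R] A) M]
    [IsSemisimpleModule U M] : IsSemisimpleModule (U ⊗[R] A) M := by
  have : IsScalarTower R A M := .to₁₂₄ R A (U ⊗[R] A) M
  have : IsScalarTower R U M := .to₁₂₄ R U (U ⊗[R] A) M
  have : SMulCommClass A U M := smulCommClass_of_isScalarTower_tensorProduct R A U M
  refine (isSemisimpleModule_iff _ M).mpr ⟨fun J => ?_⟩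
  have : SMulCommClass A U J := smulCommClass_of_isScalarTower_tensorProduct R A U J
  obtain ⟨p, hp⟩ := IsSemisimpleModule.extension_property
    (J.subtype.restrictScalars U) J.subtype_injective LinearMap.id
  have hp_smul (x : J) (a : A) : p (a • (x : M)) = a • x := LinearMap.congr_fun hp (a • x)
  let q : M →ₗ[U ⊗[R] A] J :=
    { sandwich p (Algebra.FormallyUnramified.elem R A) with
      map_smul' := map_tensorProduct_smul _ (sandwich_elem_smul p) }
  have hq (x : J) : q x = x := by
    change sandwich p _ (x : M) = x
    rw [sandwich_apply_of_forall_smul (hp_smul x), Algebra.FormallyUnramified.lmul_elem, one_smul]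
  exact ⟨_, LinearMap.isCompl_of_proj hq⟩

theorem isSemisimpleRing_tensorProduct_of_formallyUnramified (R A U : Type*) [CommRing R]
    [CommRing A] [Algebra R A] [Algebra.FormallyUnramified R A] [Algebra.EssFiniteType R A]
    [Ring U] [Algebra R U] [IsSemisimpleRing U] : IsSemisimpleRing (A ⊗[R] U) := by
  have : IsSemisimpleRing (U ⊗[R] A) := isSemisimpleModule_tensorProduct_of_formallyUnramified
  exact (Algebra.TensorProduct.comm R U A).toRingEquiv.isSemisimpleRing

end TensorProduct

theorem exists_fg_subalgebra_subset_range_map {R A B : Type*} [CommSemiring R] [CommSemiring A]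
    [Algebra R A] [Semiring B] [Algebra R B] {s : Set (A ⊗[R] B)} (hs : s.Finite) :
    ∃ C : Subalgebra R A, C.FG ∧ s ⊆ (Algebra.TensorProduct.map C.val (AlgHom.id R B)).range := by
  obtain ⟨P, ⟨g, rfl⟩, hsP⟩ := Submodule.exists_fg_le_subset_range_rTensor_subtype s hs
  let C := Algebra.adjoin R (g : Set A)
  let ι := Submodule.inclusion (Algebra.span_le_adjoin R (g : Set A))
  refine ⟨C, Subalgebra.fg_adjoin_finset g, hsP.trans ?_⟩
  have hfactor : (Submodule.span R (g : Set A)).subtype.rTensor B =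
      (Algebra.TensorProduct.map C.val (AlgHom.id R B)).toLinearMap ∘ₗ ι.rTensor B :=
    TensorProduct.ext' fun _ _ => rfl
  rw [hfactor]
  exact LinearMap.range_comp_le_range _ _

theorem isSemisimpleRing_tensorProduct_of_isSeparable (R A U : Type*) [CommRing R] [CommRing A]
    [Algebra R A] [Algebra.IsSeparable R A] [Ring U] [Algebra R U] [IsSemisimpleRing U]
    [IsNoetherianRing (A ⊗[R] U)] : IsSemisimpleRing (A ⊗[R] U) := by
  refine isSemisimpleRing_of_forall_finite_subset_semisimple_subring fun s hs => ?_
  obtain ⟨C, hC, hsC⟩ := exists_fg_subalgebra_subset_range_map hs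
  have : Algebra.IsSeparable R C := isSeparable_subalgebra C
  have : Algebra.FormallyUnramified R C := formallyUnramified_of_isSeparable
  have : Algebra.FiniteType R C := C.fg_iff_finiteType.mp hC
  have : IsSemisimpleRing (C ⊗[R] U) := isSemisimpleRing_tensorProduct_of_formallyUnramified R C U
  let j := Algebra.TensorProduct.map C.val (AlgHom.id R U)
  exact ⟨j.range.toSubring, j.rangeRestrict.toRingHom.isSemisimpleRing_of_surjective
    j.rangeRestrict_surjective, hsC⟩

theorem stmt_19_general (k : Type*) (F : Type v) (U : Type w) [CommRing k] [CommRing F]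
    [Algebra k F] [Algebra.IsSeparable k F] [Ring U] [Algebra k U] [IsSemisimpleRing U]
    (hnoeth : IsNoetherianRing (F ⊗[k] U)) :
    IsSemisimpleRing (F ⊗[k] U) ∧
      Ring.selfInjDim (F ⊗[k] U) = 0 ∧
      Ring.globalDim (F ⊗[k] U) = 0 := by
  have := isSemisimpleRing_tensorProduct_of_isSeparable k F U
  exact ⟨this, selfInjDim_eq_zero_of_isSemisimpleRing _, globalDim_eq_zero_of_isSemisimpleRing _⟩

/-- from the proof of Proposition 7.1(c): let `F` be a separable algebraic field
extension of `k` of countably infinite dimension and let `U` be a division `k`-algebra such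
that `F ⊗[k] U` is left noetherian.  Then `F ⊗[k] U` is a semisimple artinian ring; in
particular its self-injective dimension and its global dimension are `0`. -/
theorem stmt_19 (k F : Type u) [Field k] [Field F] [Algebra k F] [Algebra.IsSeparable k F]
    (hdim : Module.rank k F = Cardinal.aleph0)
    (U : Type u) [DivisionRing U] [Algebra k U]
    (hnoeth : IsNoetherianRing (F ⊗[k] U)) :
    IsSemisimpleRing (F ⊗[k] U) ∧
      Ring.selfInjDim (F ⊗[k] U) = 0 ∧
      Ring.globalDim (F ⊗[k] U) = 0 :=
  stmt_19_general k F U hnoeth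
end
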